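/- arXiv:1308.5517 — 3 statements merged into one kernel-verified Lean document; each statement's English description precedes it below -/
import Mathlib

section
/- Under the frame-wise uniform measure, almost all finite simplicial complexes have trivial automorphism group: μ_N({S ∈ K_SC^N : Aut(S) is trivial}) converges to 1 as N → ∞. -/
open FirstOrder FirstOrder.Language

universe u v

/-- A finite structure for a relational signature `L`, with underlying set a finite subset of `ℕ`,
given by its relation interpretations (sets of tuples of natural numbers). -/
structure FinStruc (L : FirstOrder.Language.{u, v}) where
  carrier : Finset ℕ
  rel : ∀ ⦃n : ℕ⦄, L.Relations n → Set (Fin n → ℕ)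
  rel_mem : ∀ ⦃n : ℕ⦄ (R : L.Relations n) (t : Fin n → ℕ), t ∈ rel R → ∀ i, t i ∈ carrier

variable {L : FirstOrder.Language.{u, v}}

/-- The first-order structure on the underlying set of a `FinStruc`. -/
instance FinStruc.str [L.IsRelational] (A : FinStruc L) :
    L.Structure {x : ℕ // x ∈ A.carrier} where
  funMap := fun f _ => isEmptyElim f
  RelMap := fun {n} R t => (fun i => (t i : ℕ)) ∈ A.rel R

/-- Satisfaction of a sentence in a `FinStruc`. -/
def FinStruc.Sat [L.IsRelational] (A : FinStruc L) (φ : L.Sentence) : Prop :=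
  {x : ℕ // x ∈ A.carrier} ⊨ φ

/-- The General Irreflexivity axiom for a relation symbol `R` and coordinates `i`, `j`:
`∀ x₁ … xₙ, R (x₁, …, xₙ) → ¬ (xᵢ = xⱼ)`. -/
def giSentence {n : ℕ} (R : L.Relations n) (i j : Fin n) : L.Sentence :=
  BoundedFormula.alls
    ((Relations.boundedFormula R fun k => Term.var (Sum.inr k)).imp
      (Term.bdEqual (Term.var (Sum.inr i)) (Term.var (Sum.inr j))).not)

/-- The General Irreflexivity axiom schema `Φ^Σ_GI`. -/
def GITheory (L : FirstOrder.Language.{u, v}) : L.Theory :=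
  { φ | ∃ (n : ℕ) (R : L.Relations n) (i j : Fin n), i ≠ j ∧ φ = giSentence R i j }

/-- A sentence is local if it has the form `∀ x₁ … xₘ, R (x₁, …, xₘ) → ψ` with `m > 0` and
`ψ` quantifier-free. -/
def IsLocalSentence (φ : L.Sentence) : Prop :=
  ∃ m : ℕ, 0 < m ∧ ∃ (R : L.Relations m) (ψ : L.BoundedFormula Empty m), ψ.IsQF ∧
    φ = BoundedFormula.alls ((Relations.boundedFormula R fun k => Term.var (Sum.inr k)).imp ψ)

/-- A class of finite structures is local if it is the class of models of a set of local
sentences containing the General Irreflexivity axioms. -/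
def IsLocalClass [L.IsRelational] (K : Set (FinStruc L)) : Prop :=
  ∃ Φ : L.Theory, (∀ φ ∈ Φ, IsLocalSentence φ) ∧ GITheory L ⊆ Φ ∧
    K = { A : FinStruc L | ∀ φ ∈ Φ, A.Sat φ }

/-- The `n`-frame of a structure: same underlying set, same interpretations of relation symbols
of arity at most `n`, empty interpretation of all higher-arity relation symbols. -/
def FinStruc.frame (A : FinStruc L) (n : ℕ) : FinStruc L where
  carrier := A.carrier
  rel := fun m R => if m ≤ n then A.rel R else ∅
  rel_mem := by
    intro m R t ht i
    by_cases h : m ≤ n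
    · exact A.rel_mem R t (by simpa [h] using ht) i
    · simp [h] at ht

/-- The induced substructure of `B` on a finite set `X`. -/
def FinStruc.restrict (B : FinStruc L) (X : Finset ℕ) : FinStruc L where
  carrier := B.carrier ∩ X
  rel := fun _ R => { t | t ∈ B.rel R ∧ ∀ i, t i ∈ X }
  rel_mem := fun _ R t ht i => Finset.mem_inter.2 ⟨B.rel_mem R t ht.1 i, ht.2 i⟩

/-- `A` is the induced substructure of `B` on the subset `A.carrier` of `B.carrier`. -/
def FinStruc.IsInducedSub (A B : FinStruc L) : Prop :=
  A.carrier ⊆ B.carrier ∧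
    ∀ ⦃n : ℕ⦄ (R : L.Relations n) (t : Fin n → ℕ),
      (∀ i, t i ∈ A.carrier) → (t ∈ A.rel R ↔ t ∈ B.rel R)

/-- `A` is isomorphic to `B`: there is a bijection of the underlying sets preserving all
relations in both directions. -/
def FinStruc.IsIsoTo (A B : FinStruc L) : Prop :=
  ∃ f : ℕ → ℕ, Set.BijOn f ↑A.carrier ↑B.carrier ∧
    ∀ ⦃n : ℕ⦄ (R : L.Relations n) (t : Fin n → ℕ), (∀ i, t i ∈ A.carrier) →
      (t ∈ A.rel R ↔ (fun i => f (t i)) ∈ B.rel R)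

/-- The Adoptive Property. -/
def AdoptiveProperty (K : Set (FinStruc L)) : Prop :=
  ∀ (n : ℕ) (B A A' : FinStruc L), B ∈ K → A ∈ K → A' ∈ K →
    A.IsInducedSub B → A.carrier.card = n → A'.carrier = A.carrier →
    A'.frame (n - 1) = A.frame (n - 1) →
    ∃ B' ∈ K, B'.carrier = B.carrier ∧ B'.frame (n - 1) = B.frame (n - 1) ∧
      ∀ R : L.Relations n,
        B'.rel R = (B.rel R \ { t | ∀ i, t i ∈ A.carrier }) ∪ A'.rel R

/-- A structure for `L` with underlying set `ℕ`, given by its relation interpretations. -/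
structure InfStruc (L : FirstOrder.Language.{u, v}) where
  rel : ∀ ⦃n : ℕ⦄, L.Relations n → Set (Fin n → ℕ)

/-- The first-order structure on `ℕ` determined by an `InfStruc`. -/
def InfStruc.str [L.IsRelational] (M : InfStruc L) : L.Structure ℕ where
  funMap := fun f _ => isEmptyElim f
  RelMap := fun {n} R t => t ∈ M.rel R

/-- Satisfaction of a sentence in an `InfStruc`. -/
def InfStruc.Sat [L.IsRelational] (M : InfStruc L) (φ : L.Sentence) : Prop :=
  @FirstOrder.Language.Sentence.Realize L ℕ M.str φ

/-- The induced finite substructure of an `InfStruc` on a finite set `X`. -/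
def InfStruc.restrict (M : InfStruc L) (X : Finset ℕ) : FinStruc L where
  carrier := X
  rel := fun _ R => { t | t ∈ M.rel R ∧ ∀ i, t i ∈ X }
  rel_mem := fun _ _ _ ht i => ht.2 i

/-- The bundled structures isomorphic to a member of `K`. -/
def toBundled (L : FirstOrder.Language.{u, v}) [L.IsRelational] (K : Set (FinStruc L)) :
    Set (CategoryTheory.Bundled.{0} L.Structure) :=
  { M | ∃ A ∈ K, Nonempty (M ≃[L] {x : ℕ // x ∈ A.carrier}) }

/-- `K^{X,l}_{A,k}`: the set of `l`-frames of members `B` of `K` with underlying set `X` whose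
`k`-frame restricted to the underlying set of `A` is the `k`-frame of `A`. -/
def KsetFr (K : Set (FinStruc L)) (X : Finset ℕ) (l : ℕ) (A : FinStruc L) (k : ℕ) :
    Set (FinStruc L) :=
  { F | ∃ B ∈ K, B.carrier = X ∧ (B.frame k).restrict A.carrier = A.frame k ∧ F = B.frame l }

/-- `N(S,k)`: the number of distinct `(k+1)`-frames of members of `K` on the underlying set of `S`
whose `k`-frame is the `k`-frame of `S`. -/
noncomputable def Ncount (K : Set (FinStruc L)) (S : FinStruc L) (k : ℕ) : ℕ :=
  (KsetFr K S.carrier (k + 1) S k).ncard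

/-- `K^N`: the members of `K` with underlying set `{0, …, N-1}`. -/
def KNset (K : Set (FinStruc L)) (N : ℕ) : Set (FinStruc L) :=
  { S | S ∈ K ∧ S.carrier = Finset.range N }

/-- The basic event `O_N(A,k)`: members of `K^N` whose induced substructure on the underlying
set of `A` has `k`-frame equal to the `k`-frame of `A`. -/
def ONset (K : Set (FinStruc L)) (N : ℕ) (A : FinStruc L) (k : ℕ) : Set (FinStruc L) :=
  { S | S ∈ KNset K N ∧ (S.frame k).restrict A.carrier = A.frame k }

/-- The signature of simplicial complexes (with the unary relation `S₀` omitted): one relation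
symbol of each arity `n ≥ 2`. -/
def Lsc : FirstOrder.Language where
  Functions := fun _ => Empty
  Relations := fun n =>
    match n with
    | 0 => Empty
    | 1 => Empty
    | _ + 2 => Unit

instance : Lsc.IsRelational := fun _ => inferInstanceAs (IsEmpty Empty)

instance (n : ℕ) : Finite (Lsc.Relations n) := by
  match n with
  | 0 => exact inferInstanceAs (Finite Empty)
  | 1 => exact inferInstanceAs (Finite Empty)
  | _ + 2 => exact inferInstanceAs (Finite Unit)

/-- A finite `Σ_sc`-structure is a simplicial complex when it satisfies General Irreflexivity,
Symmetry, and Subset Closure. -/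
def IsSimplicialFinStruc (A : FinStruc Lsc) : Prop :=
  (∀ ⦃n : ℕ⦄ (R : Lsc.Relations n) (t : Fin n → ℕ), t ∈ A.rel R → Function.Injective t) ∧
  (∀ ⦃n : ℕ⦄ (R : Lsc.Relations n) (σ : _root_.Equiv.Perm (Fin n)) (t : Fin n → ℕ),
      t ∈ A.rel R → (t ∘ σ) ∈ A.rel R) ∧
  (∀ ⦃n : ℕ⦄ (R : Lsc.Relations (n + 1)) (R' : Lsc.Relations n) (t : Fin (n + 1) → ℕ),
      t ∈ A.rel R → (t ∘ Fin.castSucc) ∈ A.rel R')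

/-- The class of finite simplicial complexes. -/
def KSC : Set (FinStruc Lsc) := { A | IsSimplicialFinStruc A }

/-- A finite structure has trivial automorphism group when every self-isomorphism is the
identity on its underlying set. -/
def FinStruc.HasTrivialAut (A : FinStruc L) : Prop :=
  ∀ f : ℕ → ℕ, Set.BijOn f ↑A.carrier ↑A.carrier →
    (∀ ⦃n : ℕ⦄ (R : L.Relations n) (t : Fin n → ℕ), (∀ i, t i ∈ A.carrier) →
      (t ∈ A.rel R ↔ (fun i => f (t i)) ∈ A.rel R)) →
    ∀ x ∈ A.carrier, f x = x

/-!
A permutation `σ` that moves `m` of `n` vertices moves at least `m * (n - 2) / 2` of the pairs of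
vertices. A `σ`-invariant graph is a union of orbits of pairs, and every moved pair lies in an orbit
of size at least two, so `σ` is an automorphism of a proportion of at most `2 ^ (-m * (n - 2) / 4)`
of all graphs. Summing `x ^ m` over all permutations gives at most `(1 + n * x) ^ n`, hence with
`x = 2 ^ (-(n - 2) / 4)` the proportion of graphs with a nontrivial automorphism tends to zero.

The signature has no symbols of arity at most one, so all simplicial complexes on `{0, …, N - 1}`
have the same `1`-frame, and the frame-wise uniform measure gives equal weight to all `2`-frames,
that is, to all graphs. An automorphism of a complex is an automorphism of its graph.
-/

section InvariantSets

open Finset Equiv.Perm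

variable {α : Type*}

theorem two_mul_card_quotient_sameCycle_le [DecidableEq α] [Fintype α] (σ : Equiv.Perm α) :
    2 * Nat.card (Quotient (SameCycle.setoid σ)) + #σ.support ≤ 2 * Fintype.card α := by
  classical
  let cls : α → Quotient (SameCycle.setoid σ) := Quotient.mk _
  have cls_apply (x : α) : cls (σ x) = cls x := Quotient.sound (sameCycle_apply_left.2 (.refl σ x))
  have fiber_le (q : Quotient (SameCycle.setoid σ)) :
      2 + #{x ∈ σ.support | cls x = q} ≤ 2 * #{x | cls x = q} := by
    by_cases hq : ∃ x ∈ σ.support, cls x = q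
    · obtain ⟨x, hx, rfl⟩ := hq
      have one_lt : 1 < #{y | cls y = cls x} :=
        one_lt_card.2 ⟨σ x, by simp [cls_apply], x, by simp, mem_support.1 hx⟩
      have := card_le_card (filter_subset_filter (cls · = cls x) (subset_univ σ.support))
      lia
    · have support_empty : #{x ∈ σ.support | cls x = q} = 0 := by
        simpa [filter_eq_empty_iff] using hq
      obtain ⟨x, rfl⟩ := Quotient.exists_rep q
      have : 0 < #{y | cls y = cls x} := card_pos.2 ⟨x, by simp⟩
      lia
  have sum_le := sum_le_sum fun q (_ : q ∈ univ) ↦ fiber_le q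
  rw [sum_add_distrib, ← mul_sum, ← card_eq_sum_card_fiberwise (by simp),
    ← card_eq_sum_card_fiberwise (by simp)] at sum_le
  simpa [mul_comm] using sum_le

theorem mem_iff_of_sameCycle [Finite α] {σ : Equiv.Perm α} {s : Set α} (hs : σ ⁻¹' s = s)
    {x y : α} (h : SameCycle σ x y) : x ∈ s ↔ y ∈ s := by
  obtain ⟨n, rfl⟩ := h.exists_nat_pow_eq
  rw [← iterate_eq_pow, ← Set.mem_preimage, Function.IsFixedPt.preimage_iterate hs n]

theorem ncard_preimage_eq_self_le [Finite α] (σ : Equiv.Perm α) :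
    {s : Set α | σ ⁻¹' s = s}.ncard ≤ 2 ^ Nat.card (Quotient (SameCycle.setoid σ)) := by
  rw [← Set.ncard_univ, ← Set.ncard_powerset]
  refine Set.ncard_le_ncard_of_injOn (Quotient.mk _ '' ·) (by simp) ?_
  have preimage_image {s : Set α} (hs : σ ⁻¹' s = s) :
      Quotient.mk (SameCycle.setoid σ) ⁻¹' (Quotient.mk _ '' s) = s :=
    (Set.subset_preimage_image _ _).antisymm' fun x ⟨y, hy, hyx⟩ ↦
      (mem_iff_of_sameCycle hs (Quotient.exact hyx)).1 hy
  intro s hs t ht hst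
  rw [← preimage_image hs, ← preimage_image ht]
  exact congrArg _ hst

theorem ncard_preimage_eq_self_sq_mul_le [DecidableEq α] [Fintype α] (σ : Equiv.Perm α) :
    {s : Set α | σ ⁻¹' s = s}.ncard ^ 2 * 2 ^ #σ.support ≤ Nat.card (Set α) ^ 2 :=
  calc
    _ ≤ (2 ^ Nat.card (Quotient (SameCycle.setoid σ))) ^ 2 * 2 ^ #σ.support := by
      gcongr
      exact ncard_preimage_eq_self_le σ
    _ = 2 ^ (2 * Nat.card (Quotient (SameCycle.setoid σ)) + #σ.support) := by ring
    _ ≤ 2 ^ (2 * Fintype.card α) := by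
      gcongr
      · norm_num
      · exact two_mul_card_quotient_sameCycle_le σ
    _ = Nat.card (Set α) ^ 2 := by simp [pow_mul']

-- Expanding `∏ i, ∑ j, weight i j` gives all functions `α → α`, of which only the permutations
-- are kept on the left.
theorem sum_pow_card_support_le {R : Type*} [DecidableEq α] [Fintype α] [CommSemiring R]
    [PartialOrder R] [IsOrderedRing R] {x : R} (hx : 0 ≤ x) :
    ∑ σ : Equiv.Perm α, x ^ #σ.support ≤ (1 + Fintype.card α * x) ^ Fintype.card α := by
  let weight (i j : α) : R := if j = i then 1 else x
  have weight_nonneg (i j : α) : 0 ≤ weight i j := by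
    by_cases h : j = i <;> simp [weight, h, hx]
  have weight_le (i j : α) : weight i j ≤ (if j = i then 1 else 0) + x := by
    by_cases h : j = i <;> simp [weight, h, le_add_of_nonneg_right hx]
  calc
    ∑ σ : Equiv.Perm α, x ^ #σ.support
      = ∑ σ : Equiv.Perm α, ∏ i, weight i (σ i) := by
      simp [weight, prod_ite, Equiv.Perm.support]
    _ ≤ ∑ f : α → α, ∏ i, weight i (f i) := by
      rw [← sum_image (s := univ) (g := fun σ : Equiv.Perm α ↦ (σ : α → α))
        (f := fun f ↦ ∏ i, weight i (f i)) DFunLike.coe_injective.injOn]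
      exact sum_le_sum_of_subset_of_nonneg (subset_univ _) fun f _ _ ↦
        prod_nonneg fun i _ ↦ weight_nonneg i (f i)
    _ = ∏ i, ∑ j, weight i j := (Fintype.prod_sum _).symm
    _ ≤ ∏ i, ∑ j, ((if j = i then 1 else 0) + x) :=
      prod_le_prod (fun i _ ↦ sum_nonneg fun j _ ↦ weight_nonneg i j) fun i _ ↦
        sum_le_sum fun j _ ↦ weight_le i j
    _ = (1 + Fintype.card α * x) ^ Fintype.card α := by simp [sum_add_distrib]

end InvariantSets

section SymmetricGraphs

open Finset

variable {V : Type*}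

/-- A simple graph as the set of its edges inside the edge set of the complete graph, so that every
subset is the edge set of a graph. -/
def edgeSubsetEquiv (V : Type*) : SimpleGraph V ≃ Set (SimpleGraph.completeGraph V).edgeSet where
  toFun G := Subtype.val ⁻¹' G.edgeSet
  invFun s := SimpleGraph.fromEdgeSet (Subtype.val '' s)
  left_inv G := by
    ext a b
    simp
  right_inv s := by
    ext ⟨e, he⟩
    have : ¬ e.IsDiag := by simpa using he
    simp [SimpleGraph.edgeSet_fromEdgeSet, this]

/-- The permutation of the pairs of distinct vertices induced by a permutation of the vertices. -/
def edgePerm (σ : Equiv.Perm V) : Equiv.Perm (SimpleGraph.completeGraph V).edgeSet :=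
  (SimpleGraph.Iso.completeGraph σ).mapEdgeSet

theorem coe_edgePerm (σ : Equiv.Perm V) (e : (SimpleGraph.completeGraph V).edgeSet) :
    (edgePerm σ e : Sym2 V) = (e : Sym2 V).map σ := rfl

theorem edgeSubsetEquiv_comap (σ : Equiv.Perm V) (G : SimpleGraph V) :
    edgeSubsetEquiv V (G.comap σ) = edgePerm σ ⁻¹' edgeSubsetEquiv V G := by
  ext ⟨e, he⟩
  induction e with | _ a b
  rfl

theorem ncard_comap_eq_self (σ : Equiv.Perm V) :
    {G : SimpleGraph V | G.comap σ = G}.ncard = {s | edgePerm σ ⁻¹' s = s}.ncard := by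
  rw [← Set.ncard_image_of_injective _ (edgeSubsetEquiv V).injective]
  congr 1
  ext s
  obtain ⟨G, rfl⟩ := (edgeSubsetEquiv V).surjective s
  simp [← edgeSubsetEquiv_comap]

theorem exists_ne_one_comap_eq_self {G : SimpleGraph V} [Nontrivial (G ≃g G)] :
    ∃ σ : Equiv.Perm V, σ ≠ 1 ∧ G.comap σ = G := by
  obtain ⟨f, hf⟩ := exists_ne (SimpleGraph.Iso.refl : G ≃g G)
  refine ⟨f.toEquiv, fun h ↦ hf (RelIso.toEquiv_injective h), ?_⟩
  ext a b
  exact f.map_adj_iff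

/-- The graph whose edges are the pairs of distinct vertices that `σ` does not map to themselves,
used to count the support of `edgePerm σ` by its degrees. -/
def movedPairs (σ : Equiv.Perm V) : SimpleGraph V :=
  SimpleGraph.fromEdgeSet {e | e.map σ ≠ e}

theorem movedPairs_adj {σ : Equiv.Perm V} {v w : V} :
    (movedPairs σ).Adj v w ↔ s(σ v, σ w) ≠ s(v, w) ∧ v ≠ w := by
  simp [movedPairs]

variable [Fintype V] [DecidableEq V]

theorem card_sub_two_le_degree_movedPairs {σ : Equiv.Perm V} [DecidableRel (movedPairs σ).Adj]
    {v : V} (hv : v ∈ σ.support) : Fintype.card V - 2 ≤ (movedPairs σ).degree v := by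
  have subset_neighborFinset : ({v, σ v} : Finset V)ᶜ ⊆ (movedPairs σ).neighborFinset v := by
    intro w hw
    simp only [mem_compl, mem_insert, mem_singleton, not_or] at hw
    have := Equiv.Perm.mem_support.1 hv
    rw [SimpleGraph.mem_neighborFinset, movedPairs_adj, Ne, Sym2.eq_iff]
    grind
  calc
    _ ≤ Fintype.card V - #{v, σ v} := by gcongr; exact card_le_two
    _ = #({v, σ v} : Finset V)ᶜ := (card_compl _).symm
    _ ≤ _ := card_le_card subset_neighborFinset

theorem card_support_edgePerm (σ : Equiv.Perm V) [DecidableRel (movedPairs σ).Adj] :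
    #(edgePerm σ).support = #(movedPairs σ).edgeFinset := by
  rw [← card_map (Function.Embedding.subtype _)]
  congr 1
  ext e
  rw [SimpleGraph.mem_edgeFinset, movedPairs, SimpleGraph.edgeSet_fromEdgeSet]
  simp [Subtype.ext_iff, coe_edgePerm, and_comm]

theorem card_support_mul_le (σ : Equiv.Perm V) :
    #σ.support * (Fintype.card V - 2) ≤ 2 * #(edgePerm σ).support := by
  classical
  calc
    _ = ∑ v ∈ σ.support, (Fintype.card V - 2) := by simp
    _ ≤ ∑ v ∈ σ.support, (movedPairs σ).degree v :=
      sum_le_sum fun v hv ↦ card_sub_two_le_degree_movedPairs hv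
    _ ≤ ∑ v, (movedPairs σ).degree v := sum_le_sum_of_subset (subset_univ _)
    _ = _ := by rw [SimpleGraph.sum_degrees_eq_twice_card_edges, card_support_edgePerm]

theorem ncard_comap_eq_self_pow_mul_le (σ : Equiv.Perm V) :
    {G : SimpleGraph V | G.comap σ = G}.ncard ^ 4 * 2 ^ (#σ.support * (Fintype.card V - 2))
      ≤ Nat.card (SimpleGraph V) ^ 4 := by
  rw [ncard_comap_eq_self, Nat.card_congr (edgeSubsetEquiv V)]
  calc
    _ ≤ {s | edgePerm σ ⁻¹' s = s}.ncard ^ 4 * 2 ^ (2 * #(edgePerm σ).support) :=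
      Nat.mul_le_mul_left _ (Nat.pow_le_pow_right two_pos (card_support_mul_le σ))
    _ = ({s | edgePerm σ ⁻¹' s = s}.ncard ^ 2 * 2 ^ #(edgePerm σ).support) ^ 2 := by ring
    _ ≤ (Nat.card (Set (SimpleGraph.completeGraph V).edgeSet) ^ 2) ^ 2 :=
      Nat.pow_le_pow_left (ncard_preimage_eq_self_sq_mul_le _) 2
    _ = _ := by ring

-- The base `9 / 10` is a rational number above `2 ^ (-1 / 4)`.
theorem ncard_comap_eq_self_le (σ : Equiv.Perm V) :
    ({G : SimpleGraph V | G.comap σ = G}.ncard : ℝ)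
      ≤ ((9 / 10 : ℝ) ^ (Fintype.card V - 2)) ^ #σ.support * Nat.card (SimpleGraph V) := by
  refine le_of_pow_le_pow_left₀ four_ne_zero (by positivity) ?_
  set m := #σ.support * (Fintype.card V - 2) with hm
  calc
    ({G : SimpleGraph V | G.comap σ = G}.ncard : ℝ) ^ 4
      ≤ (1 / 2 : ℝ) ^ m * (Nat.card (SimpleGraph V) : ℝ) ^ 4 := by
      rw [one_div_pow, one_div_mul_eq_div, le_div_iff₀ (by positivity)]
      exact_mod_cast ncard_comap_eq_self_pow_mul_le σ
    _ ≤ ((9 / 10 : ℝ) ^ 4) ^ m * (Nat.card (SimpleGraph V) : ℝ) ^ 4 := by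
      gcongr
      norm_num
    _ = _ := by
      rw [hm, mul_pow, ← pow_mul, ← pow_mul, ← pow_mul]
      congr 2
      ring

theorem ncard_nontrivial_iso_le (V : Type*) [Fintype V] :
    ({G : SimpleGraph V | Nontrivial (G ≃g G)}.ncard : ℝ) ≤
      ((1 + Fintype.card V * (9 / 10 : ℝ) ^ (Fintype.card V - 2)) ^ Fintype.card V - 1) *
        Nat.card (SimpleGraph V) := by
  classical
  set x : ℝ := (9 / 10) ^ (Fintype.card V - 2)
  have subset_biUnion : {G : SimpleGraph V | Nontrivial (G ≃g G)} ⊆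
      ⋃ σ ∈ univ.erase (1 : Equiv.Perm V), {G | G.comap σ = G} := fun G (_ : Nontrivial _) ↦ by
    simpa using exists_ne_one_comap_eq_self
  calc
    ({G : SimpleGraph V | Nontrivial (G ≃g G)}.ncard : ℝ)
      ≤ ∑ σ ∈ univ.erase (1 : Equiv.Perm V), ({G : SimpleGraph V | G.comap σ = G}.ncard : ℝ) := by
      exact_mod_cast (Set.ncard_le_ncard subset_biUnion).trans (set_ncard_biUnion_le _ _)
    _ ≤ ∑ σ ∈ univ.erase (1 : Equiv.Perm V), x ^ #σ.support * Nat.card (SimpleGraph V) :=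
      sum_le_sum fun σ _ ↦ ncard_comap_eq_self_le σ
    _ = (∑ σ : Equiv.Perm V, x ^ #σ.support - 1) * Nat.card (SimpleGraph V) := by
      rw [← sum_mul, sum_erase_eq_sub (mem_univ _), Equiv.Perm.support_one, Finset.card_empty,
        pow_zero]
    _ ≤ _ := by
      gcongr
      exact sum_pow_card_support_le (by positivity)

end SymmetricGraphs

section AsymmetricGraphs

open Filter Topology

theorem tendsto_one_add_mul_pow_sub_pow {r : ℝ} (hr : |r| < 1) (k : ℕ) :
    Tendsto (fun n : ℕ ↦ (1 + n * r ^ (n - k)) ^ n) atTop (𝓝 1) := by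
  suffices h : Tendsto (fun n : ℕ ↦ (n : ℝ) * (n * r ^ (n - k))) atTop (𝓝 0) by
    simpa using Real.tendsto_one_add_pow_exp_of_tendsto h
  refine (tendsto_add_atTop_iff_nat k).1 ?_
  have pow_mul_tendsto (j : ℕ) := tendsto_pow_const_mul_const_pow_of_abs_lt_one j hr
  convert ((pow_mul_tendsto 2).add ((pow_mul_tendsto 1).const_mul (2 * k : ℝ))).add
    ((pow_mul_tendsto 0).const_mul (k ^ 2 : ℝ)) using 2 with n
  · rw [Nat.add_sub_cancel]
    push_cast
    ring
  · simp

theorem tendsto_ncard_subsingleton_iso_div_card :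
    Tendsto (fun n ↦ ({G : SimpleGraph (Fin n) | Subsingleton (G ≃g G)}.ncard : ℝ) /
      Nat.card (SimpleGraph (Fin n))) atTop (𝓝 1) := by
  have lower_le (n : ℕ) : 2 - (1 + n * (9 / 10 : ℝ) ^ (n - 2)) ^ n ≤
      ({G : SimpleGraph (Fin n) | Subsingleton (G ≃g G)}.ncard : ℝ) /
        Nat.card (SimpleGraph (Fin n)) := by
    have add_compl := Set.ncard_add_ncard_compl {G : SimpleGraph (Fin n) | Subsingleton (G ≃g G)}
    have nontrivial_le := ncard_nontrivial_iso_le (Fin n)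
    simp only [Set.compl_ofPred, not_subsingleton_iff_nontrivial] at add_compl
    simp only [Fintype.card_fin] at nontrivial_le
    rw [le_div_iff₀ (mod_cast Nat.card_pos)]
    rify at add_compl
    linarith
  refine tendsto_of_tendsto_of_tendsto_of_le_of_le ?_ tendsto_const_nhds lower_le fun n ↦ ?_
  · convert (tendsto_one_add_mul_pow_sub_pow (r := 9 / 10) (by norm_num [abs_lt]) 2).const_sub 2
      using 2
    norm_num
  · exact div_le_one_of_le₀ (Nat.cast_le.2 (Set.ncard_le_card _)) (by positivity)

end AsymmetricGraphs

section UniformMeasure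

open MeasureTheory

theorem measure_inter_preimage_of_uniform {Ω ι : Type*} {m : MeasurableSpace Ω} {μ : Measure Ω}
    [Finite ι] {s : Set Ω} {f : Ω → ι} (hf : ∀ i, MeasurableSet (f ⁻¹' {i}))
    (h : ∀ i j, μ (s ∩ f ⁻¹' {i}) = μ (s ∩ f ⁻¹' {j})) (t : Set ι) :
    μ (s ∩ f ⁻¹' t) = t.ncard / Nat.card ι * μ s := by
  cases nonempty_fintype ι
  obtain ⟨t, rfl⟩ := t.toFinite.exists_finset_coe
  obtain rfl | ⟨i, -⟩ := t.eq_empty_or_nonempty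
  · simp
  have measure_inter (t : Finset ι) : μ (s ∩ f ⁻¹' t) = t.card * μ (s ∩ f ⁻¹' {i}) := by
    have sum_restrict := sum_measure_preimage_singleton (μ := μ.restrict s) t fun j _ ↦ hf j
    have measurable_preimage : MeasurableSet (f ⁻¹' t) := by
      rw [← Set.biUnion_preimage_singleton]
      exact t.measurableSet_biUnion fun j _ ↦ hf j
    simp only [Measure.restrict_apply, hf, measurable_preimage, Set.inter_comm _ s] at sum_restrict
    rw [← sum_restrict, Finset.sum_congr rfl fun j _ ↦ h j i, Finset.sum_const, nsmul_eq_mul]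
  have measure_eq : μ s = Nat.card ι * μ (s ∩ f ⁻¹' {i}) := by
    simpa using measure_inter Finset.univ
  have card_ne_zero : (Nat.card ι : ENNReal) ≠ 0 :=
    Nat.cast_ne_zero.2 (Nat.card_ne_zero.2 ⟨⟨i⟩, inferInstance⟩)
  rw [measure_inter, measure_eq, ← mul_assoc, ENNReal.div_mul_cancel card_ne_zero (by simp),
    Set.ncard_coe_finset]

end UniformMeasure

attribute [ext] FinStruc

namespace FinStruc

/-- The graph on `{0, …, N - 1}` joining distinct vertices that are related by `R` in at least one
of the two orders. -/
def relGraph (A : FinStruc L) (R : L.Relations 2) (N : ℕ) : SimpleGraph (Fin N) :=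
  SimpleGraph.fromRel fun a b ↦ ![(a : ℕ), b] ∈ A.rel R

theorem hasTrivialAut_of_subsingleton_iso {A : FinStruc L} {R : L.Relations 2} {N : ℕ}
    (hA : A.carrier = Finset.range N) (h : Subsingleton (A.relGraph R N ≃g A.relGraph R N)) :
    A.HasTrivialAut := by
  intro f hf hrel x hx
  rw [hA] at hf hrel hx
  let σ : Equiv.Perm (Fin N) := Equiv.ofBijective
    (fun a ↦ ⟨f a, Finset.mem_range.1 (hf.mapsTo (by simp))⟩)
    (Finite.injective_iff_bijective.1 fun a b hab ↦
      Fin.ext (hf.injOn (by simp) (by simp) (congrArg Fin.val hab)))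
  have mem_rel_iff (a b : Fin N) : ![f a, f b] ∈ A.rel R ↔ ![(a : ℕ), b] ∈ A.rel R := by
    rw [hrel R ![(a : ℕ), b] (by simp [Fin.forall_fin_two])]
    congr! 1
    ext i
    fin_cases i <;> rfl
  let φ : A.relGraph R N ≃g A.relGraph R N :=
    ⟨σ, and_congr σ.injective.ne_iff (or_congr (mem_rel_iff _ _) (mem_rel_iff _ _))⟩
  have φ_eq_refl : φ = SimpleGraph.Iso.refl := h.elim _ _
  exact congrArg Fin.val (DFunLike.congr_fun φ_eq_refl ⟨x, Finset.mem_range.1 hx⟩)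

theorem restrict_carrier (A : FinStruc L) : A.restrict A.carrier = A := by
  ext n R t
  · simp [restrict]
  · exact ⟨And.left, fun ht ↦ ⟨ht, A.rel_mem R t ht⟩⟩

end FinStruc

theorem mem_ONset_iff_of_carrier_eq_range {K : Set (FinStruc L)} {A S : FinStruc L} {N k : ℕ}
    (hA : A.carrier = Finset.range N) :
    S ∈ ONset K N A k ↔ S ∈ KNset K N ∧ S.frame k = A.frame k := by
  refine and_congr_right fun hS ↦ ?_
  have : A.carrier = (S.frame k).carrier := hA.trans hS.2.symm
  rw [this, FinStruc.restrict_carrier]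

theorem ONset_congr {K : Set (FinStruc L)} {A B : FinStruc L} {N k : ℕ}
    (h : A.frame k = B.frame k) : ONset K N A k = ONset K N B k := by
  have carrier_eq : A.carrier = B.carrier := (FinStruc.ext_iff.1 h).1
  simp only [ONset, h, carrier_eq]

theorem Ncount_congr {K : Set (FinStruc L)} {A B : FinStruc L} {k : ℕ}
    (h : A.frame k = B.frame k) : Ncount K A k = Ncount K B k := by
  have carrier_eq : A.carrier = B.carrier := (FinStruc.ext_iff.1 h).1
  simp only [Ncount, KsetFr, h, carrier_eq]

theorem measure_ONset_succ_congr {K : Set (FinStruc L)} {A B : FinStruc L} {N k : ℕ}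
    {μ : @MeasureTheory.Measure (FinStruc L) ⊤}
    (hA : μ (ONset K N A (k + 1)) = μ (ONset K N A k) / Ncount K A k)
    (hB : μ (ONset K N B (k + 1)) = μ (ONset K N B k) / Ncount K B k)
    (h : A.frame k = B.frame k) : μ (ONset K N A (k + 1)) = μ (ONset K N B (k + 1)) := by
  rw [hA, hB, ONset_congr h, Ncount_congr h]

section SimplicialComplexes

variable {N : ℕ}

/-- The symbol `S₁` of the signature of simplicial complexes, which holds of the edges. -/
def edgeSymbol : Lsc.Relations 2 := ()

theorem frame_one_eq_of_carrier_eq {S T : FinStruc Lsc} (h : S.carrier = T.carrier) :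
    S.frame 1 = T.frame 1 := by
  refine FinStruc.ext h ?_
  funext n R
  match n, R with
  | n + 2, _ => rfl

theorem frame_two_eq_of_rel_eq {S T : FinStruc Lsc} (h : S.carrier = T.carrier)
    (hrel : S.rel edgeSymbol = T.rel edgeSymbol) : S.frame 2 = T.frame 2 := by
  refine FinStruc.ext h ?_
  funext n R
  match n, R with
  | 2, _ => exact hrel
  | n + 3, _ => rfl

theorem relGraph_edgeSymbol_adj {S : FinStruc Lsc} (hS : S ∈ KSC) {a b : Fin N} :
    (S.relGraph edgeSymbol N).Adj a b ↔ ![(a : ℕ), b] ∈ S.rel edgeSymbol := by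
  obtain ⟨irreflexive, symmetric, -⟩ := hS
  have symm_apply (h : ![(b : ℕ), a] ∈ S.rel edgeSymbol) : ![(a : ℕ), b] ∈ S.rel edgeSymbol := by
    convert symmetric edgeSymbol (Equiv.swap 0 1) _ h using 1
    ext i
    fin_cases i <;> rfl
  refine ⟨fun h ↦ h.2.elim id symm_apply, fun h ↦ ⟨fun hab ↦ ?_, .inl h⟩⟩
  subst hab
  exact zero_ne_one (irreflexive edgeSymbol _ h (a₁ := 0) (a₂ := 1) rfl)

theorem mem_rel_edgeSymbol_iff {S : FinStruc Lsc} (hS : S ∈ KNset KSC N) {t : Fin 2 → ℕ} :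
    t ∈ S.rel edgeSymbol ↔
      ∃ a b : Fin N, (S.relGraph edgeSymbol N).Adj a b ∧ t = ![(a : ℕ), b] := by
  simp only [relGraph_edgeSymbol_adj hS.1]
  refine ⟨fun ht ↦ ?_, fun ⟨_, _, hab, h⟩ ↦ h ▸ hab⟩
  have lt (i : Fin 2) : t i < N := Finset.mem_range.1 (hS.2 ▸ S.rel_mem edgeSymbol t ht i)
  have eq_vec : t = ![t 0, t 1] := List.ofFn_inj.1 (by simp)
  exact ⟨⟨t 0, lt 0⟩, ⟨t 1, lt 1⟩, eq_vec ▸ ht, eq_vec⟩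

theorem frame_two_eq_iff {S T : FinStruc Lsc} (hS : S ∈ KNset KSC N) (hT : T ∈ KNset KSC N) :
    S.frame 2 = T.frame 2 ↔ S.relGraph edgeSymbol N = T.relGraph edgeSymbol N := by
  refine ⟨fun h ↦ ?_, fun h ↦ ?_⟩
  · have rel_eq : S.rel edgeSymbol = T.rel edgeSymbol :=
      congrFun₂ (FinStruc.ext_iff.1 h).2 2 edgeSymbol
    simp only [FinStruc.relGraph, rel_eq]
  · refine frame_two_eq_of_rel_eq (hS.2.trans hT.2.symm) (Set.ext fun t ↦ ?_)
    rw [mem_rel_edgeSymbol_iff hS, mem_rel_edgeSymbol_iff hT, h]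

/-- The one-dimensional simplicial complex whose edges are those of `G`. -/
def graphComplex (G : SimpleGraph (Fin N)) : FinStruc Lsc where
  carrier := Finset.range N
  rel
    | 2, _ => {t | ∃ a b, G.Adj a b ∧ t = ![(a : ℕ), b]}
    | _, _ => ∅
  rel_mem
    | 2, _, _, ⟨a, b, _, rfl⟩, i => by fin_cases i <;> simp

theorem graphComplex_mem_KNset (G : SimpleGraph (Fin N)) : graphComplex G ∈ KNset KSC N := by
  refine ⟨⟨fun n R t ht ↦ ?_, fun n R σ t ht ↦ ?_, fun n R R' t ht ↦ ?_⟩, rfl⟩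
  · match n, R, t, ht with
    | 2, _, _, ⟨a, b, hab, rfl⟩ =>
      simpa [Function.Injective, Fin.forall_fin_two, Fin.val_inj, eq_comm] using hab.ne
  · match n, R, σ, t, ht with
    | 2, _, σ, _, ⟨a, b, hab, rfl⟩ =>
      obtain rfl | rfl : σ = 1 ∨ σ = Equiv.swap 0 1 := by decide +revert
      · exact ⟨a, b, hab, rfl⟩
      · exact ⟨b, a, hab.symm, List.ofFn_inj.1 (by simp)⟩
  · match n, R, t, ht with
    | 1, _, _, _ => exact R'.elim

theorem relGraph_graphComplex (G : SimpleGraph (Fin N)) :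
    (graphComplex G).relGraph edgeSymbol N = G := by
  ext a b
  rw [relGraph_edgeSymbol_adj (graphComplex_mem_KNset G).1]
  refine ⟨fun ⟨c, d, hcd, h⟩ ↦ ?_, fun h ↦ ⟨a, b, h, rfl⟩⟩
  obtain ⟨rfl, rfl⟩ : a = c ∧ b = d := by
    simpa [Fin.val_inj] using h
  exact hcd

theorem ONset_graphComplex_two (G : SimpleGraph (Fin N)) :
    ONset KSC N (graphComplex G) 2 =
      KNset KSC N ∩ (FinStruc.relGraph · edgeSymbol N) ⁻¹' {G} := by
  ext S
  rw [mem_ONset_iff_of_carrier_eq_range rfl]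
  refine and_congr_right fun hS ↦ ?_
  rw [frame_two_eq_iff hS (graphComplex_mem_KNset G), relGraph_graphComplex]
  rfl

end SimplicialComplexes

section AsymmetricStructures

open MeasureTheory Filter Topology

theorem statement_13_general (K : Set (FinStruc L)) (R : L.Relations 2)
    (μ : ℕ → @Measure (FinStruc L) ⊤) (hconc : ∀ N, μ N (KNset K N) = 1)
    (huniform : ∀ N G H, μ N (KNset K N ∩ (FinStruc.relGraph · R N) ⁻¹' {G}) =
      μ N (KNset K N ∩ (FinStruc.relGraph · R N) ⁻¹' {H})) :
    Tendsto (fun N ↦ μ N {S | S ∈ KNset K N ∧ S.HasTrivialAut}) atTop (𝓝 1) := by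
  let asymmetric (N : ℕ) : Set (FinStruc L) :=
    KNset K N ∩ (FinStruc.relGraph · R N) ⁻¹' {G | Subsingleton (G ≃g G)}
  have measure_asymmetric (N : ℕ) :
      μ N (asymmetric N) = ENNReal.ofReal ({G : SimpleGraph (Fin N) | Subsingleton (G ≃g G)}.ncard /
        Nat.card (SimpleGraph (Fin N))) := by
    rw [measure_inter_preimage_of_uniform (fun _ ↦ MeasurableSpace.measurableSet_top) (huniform N),
      hconc, mul_one, ENNReal.ofReal_div_of_pos (Nat.cast_pos.2 Nat.card_pos),
      ENNReal.ofReal_natCast, ENNReal.ofReal_natCast]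
  have tendsto_asymmetric : Tendsto (fun N ↦ μ N (asymmetric N)) atTop (𝓝 1) := by
    simpa only [measure_asymmetric, ENNReal.ofReal_one] using
      ENNReal.tendsto_ofReal tendsto_ncard_subsingleton_iso_div_card
  exact tendsto_of_tendsto_of_tendsto_of_le_of_le tendsto_asymmetric tendsto_const_nhds
    (fun N ↦ measure_mono fun S ⟨hS, h⟩ ↦ ⟨hS, FinStruc.hasTrivialAut_of_subsingleton_iso hS.2 h⟩)
    fun N ↦ (measure_mono fun S hS ↦ hS.1).trans_eq (hconc N)

end AsymmetricStructures

/-- Under the frame-wise uniform measure, almost all finite simplicial complexes have trivial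
automorphism group. -/
theorem statement_13
    (μ : ℕ → @MeasureTheory.Measure (FinStruc Lsc) ⊤)
    (hprob : ∀ N, MeasureTheory.IsProbabilityMeasure (μ N))
    (hconc : ∀ N, μ N (KNset KSC N) = 1)
    (h0 : ∀ N, ∀ A ∈ KSC, A.carrier ⊆ Finset.range N → μ N (ONset KSC N A 0) = 1)
    (hrec : ∀ N, ∀ A ∈ KSC, A.carrier ⊆ Finset.range N → ∀ k : ℕ,
      μ N (ONset KSC N A (k + 1)) = μ N (ONset KSC N A k) / (Ncount KSC A k : ENNReal)) :
    Filter.Tendsto (fun N => μ N { S | S ∈ KNset KSC N ∧ S.HasTrivialAut }) Filter.atTop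
      (nhds (1 : ENNReal)) := by
  refine statement_13_general KSC edgeSymbol μ hconc fun N G H ↦ ?_
  simpa only [← ONset_graphComplex_two] using
    measure_ONset_succ_congr (hrec N _ (graphComplex_mem_KNset G).1 subset_rfl 1)
      (hrec N _ (graphComplex_mem_KNset H).1 subset_rfl 1) (frame_one_eq_of_carrier_eq rfl)
end

section
/- Let K be a local class, over a locally finite relational signature, every member of which satisfies the Symmetry schema; let F be the Fraïssé limit of K with underlying set V. Let H be a finite group, S ⊂ V a finite subset, and v ∈ V ∖ S. Suppose ρ is a left action of H on F↾S by automorphisms. Then there is a finite subset S' ⊂ V with S ∪ {v} ⊆ S' such that ρ extends to an action of H on F↾S' by automorphisms with trivial stabilizers on S' ∖ S. -/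
open FirstOrder FirstOrder.Language

universe u v

variable {L : FirstOrder.Language.{u, v}}

/-- Every member of `K` satisfies the Symmetry schema: each relation is invariant under all
permutations of its arguments. -/
def SymmetricClass (K : Set (FinStruc L)) : Prop :=
  ∀ A ∈ K, ∀ ⦃n : ℕ⦄ (R : L.Relations n) (σ : _root_.Equiv.Perm (Fin n)) (t : Fin n → ℕ),
    t ∈ A.rel R → (t ∘ σ) ∈ A.rel R

/-- `ρ` is a left action of the group `H` on the induced substructure of `F` on the subset `S`,
by automorphisms of that substructure. -/
def ActsOn (L : FirstOrder.Language.{u, v}) (F : Type*) [L.Structure F] (H : Type*) [Group H]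
    (ρ : H → F → F) (S : Set F) : Prop :=
  (∀ h : H, Set.BijOn (ρ h) S S) ∧
  (∀ x ∈ S, ρ 1 x = x) ∧
  (∀ g h : H, ∀ x ∈ S, ρ (g * h) x = ρ g (ρ h x)) ∧
  (∀ h : H, ∀ ⦃n : ℕ⦄ (R : L.Relations n) (t : Fin n → F), (∀ i, t i ∈ S) →
    (Structure.RelMap R t ↔ Structure.RelMap R fun i => ρ h (t i)))

/-!
Let `X` be a finite set of points to be added to `S`, such as `{v}`. Glue one copy of the
substructure on `S ∪ X` for every `h : H` along `S`, the copy with index `h` being attached through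
the action of `h` on `S`, and add no further relations. Left multiplication
of the indices extends the action on `S` to the resulting free amalgam, freely outside `S`.
Each related tuple of the amalgam lies in a single copy of `S ∪ X`, so local sentences pass from
`S ∪ X` to the amalgam; hence the amalgam embeds into `F`, and by ultrahomogeneity it does so
over the copy with index `1`.
-/

/-- The action of `H` on the `L`-structure `M` is by automorphisms, for a relational language `L`:
only invariance of the relations is required. -/
def PreservesRelations (L : FirstOrder.Language.{u, v}) (H M : Type*) [L.Structure M] [SMul H M] :
    Prop :=
  ∀ (h : H) ⦃n : ℕ⦄ (R : L.Relations n) (t : Fin n → M),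
    Structure.RelMap R (h • t) ↔ Structure.RelMap R t

theorem PreservesRelations.of_forall_relMap_smul {H M : Type*} [L.Structure M] [Group H]
    [MulAction H M]
    (hM : ∀ (h : H) ⦃n : ℕ⦄ (R : L.Relations n) (t : Fin n → M),
      Structure.RelMap R t → Structure.RelMap R (h • t)) :
    PreservesRelations L H M := fun h _ R t ↦
  ⟨fun ht ↦ inv_smul_smul h t ▸ hM h⁻¹ R (h • t) ht, hM h R t⟩

/-- The action on the range of `e` transported from `T` along `e`, extended to a function on all
of `F` by the identity outside the range. It is meaningful only for injective `e`. -/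
noncomputable def transportAction {H T F : Type*} [SMul H T] (e : T → F) (h : H) : F → F :=
  Function.extend e (fun y ↦ e (h • y)) id

theorem transportAction_apply {H T F : Type*} [SMul H T] {e : T → F} (he : Function.Injective e)
    (h : H) (y : T) : transportAction e h (e y) = e (h • y) :=
  he.extend_apply ..

section ActsOn

variable {F H : Type*} [L.Structure F] [Group H] {ρ : H → F → F} {A : L.Substructure F}

/-- The action on the type `A` underlying an action on the substructure `A` of `F`. -/
abbrev ActsOn.mulAction (hρ : ActsOn L F H ρ A) : MulAction H A where
  smul h x := ⟨ρ h x, (hρ.1 h).mapsTo x.2⟩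
  one_smul x := Subtype.ext (hρ.2.1 x x.2)
  mul_smul g h x := Subtype.ext (hρ.2.2.1 g h x x.2)

theorem ActsOn.preservesRelations (hρ : ActsOn L F H ρ A) :
    letI := hρ.mulAction
    PreservesRelations L H A :=
  fun h _ R t ↦ (hρ.2.2.2 h R (fun i ↦ t i) fun i ↦ (t i).2).symm

theorem PreservesRelations.actsOn_range {T : Type*} [L.Structure T] [MulAction H T]
    (hT : PreservesRelations L H T) (e : T ↪[L] F) :
    ActsOn L F H (transportAction e) (Set.range e) := by
  have transport_apply (h : H) (y : T) : transportAction e h (e y) = e (h • y) :=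
    transportAction_apply e.injective h y
  refine ⟨fun h ↦ ⟨?_, ?_, ?_⟩, ?_, ?_, ?_⟩
  · rintro _ ⟨y, rfl⟩
    exact ⟨h • y, (transport_apply h y).symm⟩
  · rintro _ ⟨y, rfl⟩ _ ⟨z, rfl⟩ hyz
    rw [transport_apply, transport_apply, e.injective.eq_iff] at hyz
    exact congrArg e (MulAction.injective h hyz)
  · rintro _ ⟨y, rfl⟩
    exact ⟨e (h⁻¹ • y), ⟨_, rfl⟩, by rw [transport_apply, smul_inv_smul]⟩
  · rintro _ ⟨y, rfl⟩
    rw [transport_apply, one_smul]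
  · rintro g h _ ⟨y, rfl⟩
    rw [transport_apply, transport_apply, transport_apply, mul_smul]
  · intro h n R t ht
    choose y hy using ht
    obtain rfl : e ∘ y = t := funext hy
    simp only [Function.comp_apply, transport_apply]
    exact (e.map_rel R y).trans ((hT h R y).symm.trans (e.map_rel R (h • y)).symm)

end ActsOn

/-- The structure on `{0, …, n - 1}` transported along a bijection of a structure `T` with
`Fin n`. -/
def FinStruc.ofEquivFin {T : Type*} [L.Structure T] {n : ℕ} (e : T ≃ Fin n) : FinStruc L where
  carrier := Finset.range n
  rel _ R := {t | ∃ w, Structure.RelMap R w ∧ ∀ i, (e (w i) : ℕ) = t i}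
  rel_mem := by
    rintro m R t ⟨w, -, hw⟩ i
    exact hw i ▸ Finset.mem_range.2 (e (w i)).2

section Models

variable [L.IsRelational]

/-- The isomorphism of a structure `T` with its transport along a bijection with `Fin n`. -/
def FinStruc.equivOfEquivFin {T : Type*} [L.Structure T] {n : ℕ} (e : T ≃ Fin n) :
    T ≃[L] {x : ℕ // x ∈ (FinStruc.ofEquivFin (L := L) e).carrier} where
  toEquiv := e.trans (Fin.equivSubtype.trans
    (Equiv.subtypeEquivRight fun _ ↦ Finset.mem_range.symm))
  map_fun' g := isEmptyElim g
  map_rel' R t := by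
    refine ⟨?_, fun ht ↦ ⟨t, ht, fun _ ↦ rfl⟩⟩
    rintro ⟨w, hw, hwt⟩
    obtain rfl : w = t := funext fun i ↦ e.injective (Fin.ext (hwt i))
    exact hw

theorem model_iff_nonempty_embedding_of_age_eq {Φ : L.Theory} {F : Type} [L.Structure F]
    (hF : L.age F = toBundled L {A : FinStruc L | ∀ φ ∈ Φ, A.Sat φ})
    (T : Type*) [L.Structure T] [Finite T] :
    T ⊨ Φ ↔ Nonempty (T ↪[L] F) := by
  obtain ⟨n, ⟨e⟩⟩ := Finite.exists_equiv_fin T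
  let A : FinStruc L := FinStruc.ofEquivFin e
  let E : T ≃[L] {x : ℕ // x ∈ A.carrier} := FinStruc.equivOfEquivFin e
  have mem_age_iff : (⟨{x : ℕ // x ∈ A.carrier}, A.str⟩ : CategoryTheory.Bundled L.Structure) ∈
      L.age F ↔ Nonempty (T ↪[L] F) :=
    ⟨fun ⟨_, ⟨f⟩⟩ ↦ ⟨f.comp E.toEmbedding⟩,
      fun ⟨f⟩ ↦ ⟨Structure.FG.of_finite, ⟨f.comp E.symm.toEmbedding⟩⟩⟩
  rw [← mem_age_iff, hF, Theory.model_iff]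
  constructor
  · exact fun hT ↦ ⟨A, fun φ hφ ↦ (StrongHomClass.realize_sentence E φ).1 (hT φ hφ), ⟨.refl L _⟩⟩
  · rintro ⟨B, hB, ⟨E'⟩⟩ φ hφ
    exact (StrongHomClass.realize_sentence (E'.comp E) φ).2 (hB φ hφ)

end Models

theorem IsLocalSentence.realize_of_relMap_lifts {φ : L.Sentence} (hφ : IsLocalSentence φ)
    {P T : Type*} [L.Structure P] [L.Structure T]
    (hT : ∀ ⦃n : ℕ⦄ (R : L.Relations n) (t : Fin n → T), Structure.RelMap R t →
      ∃ (f : P ↪[L] T) (w : Fin n → P), f ∘ w = t)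
    (hP : P ⊨ φ) : T ⊨ φ := by
  obtain ⟨m, -, R, ψ, hψ, rfl⟩ := hφ
  simp only [Sentence.Realize, BoundedFormula.realize_alls, BoundedFormula.realize_imp,
    BoundedFormula.realize_rel, Term.realize_var, Sum.elim_inr] at hP ⊢
  intro t ht
  obtain ⟨f, w, rfl⟩ := hT R t ht
  have hw : ψ.Realize (M := P) default w := hP w ((f.map_rel R w).1 ht)
  have hfw : ψ.Realize (f ∘ default) (f ∘ w) := (hψ.realize_embedding f).2 hw
  rwa [Subsingleton.elim (f ∘ default) default] at hfw

/-- The free amalgam over `A` of copies of `P` indexed by `H`, where the copy with index `h` is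
glued to `A` along the translate by `h` of the embedding `f`. Its points are those of `A`,
together with the points of each copy outside the range of `f`; the action of `H` on `A` enters
through `FreeAmalgam.copy`. -/
inductive FreeAmalgam {A P : Type*} [L.Structure A] [L.Structure P] (f : A ↪[L] P) (H : Type*)
  | base (a : A)
  | point (h : H) (p : P) (hp : p ∉ Set.range f)

namespace FreeAmalgam

variable {A P H : Type*} [L.Structure A] [L.Structure P] (f : A ↪[L] P)

instance [Finite P] [Finite H] : Finite (FreeAmalgam f H) := by
  have : Finite A := Finite.of_injective f f.injective
  let toSum : FreeAmalgam f H → A ⊕ H × P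
    | base a => .inl a
    | point h p _ => .inr (h, p)
  have toSum_injective : Function.Injective toSum := by
    rintro (a | ⟨h, p, hp⟩) (a' | ⟨h', p', hp'⟩) heq <;> cases heq <;> rfl
  exact Finite.of_injective toSum toSum_injective

variable [Group H] [MulAction H A]

instance : MulAction H (FreeAmalgam f H) where
  smul
    | g, base a => base (g • a)
    | g, point h p hp => point (g * h) p hp
  one_smul
    | base a => congrArg base (one_smul H a)
    | point h p hp => congrArg (point · p hp) (one_mul h)
  mul_smul
    | g, g', base a => congrArg base (mul_smul g g' a)
    | g, g', point h p hp => congrArg (point · p hp) (mul_assoc g g' h)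

open Classical in
/-- The inclusion of the copy of `P` with index `h` into the free amalgam. -/
noncomputable def copy (h : H) (p : P) : FreeAmalgam f H :=
  if hp : p ∈ Set.range f then base (h • hp.choose) else point h p hp

theorem copy_apply (h : H) (a : A) : copy f h (f a) = base (h • a) := by
  have ha : f a ∈ Set.range f := ⟨a, rfl⟩
  rw [copy, dif_pos ha, f.injective ha.choose_spec]

theorem copy_of_notMem_range (h : H) {p : P} (hp : p ∉ Set.range f) :
    copy f h p = point h p hp :=
  dif_neg hp

theorem smul_copy (g h : H) (p : P) : g • copy f h p = copy f (g * h) p := by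
  by_cases hp : p ∈ Set.range f
  · obtain ⟨a, rfl⟩ := hp
    rw [copy_apply, copy_apply, mul_smul]
    rfl
  · rw [copy_of_notMem_range f _ hp, copy_of_notMem_range f _ hp]
    rfl

theorem smul_copy_one_apply (h : H) (a : A) :
    h • copy f (1 : H) (f a) = copy f (1 : H) (f (h • a)) := by
  rw [smul_copy, copy_apply, copy_apply, mul_one, one_smul]

variable {f}

theorem eq_one_of_smul_eq_self {h : H} {x : FreeAmalgam f H}
    (hx : x ∉ Set.range (copy f (1 : H) ∘ f)) (hfix : h • x = x) : h = 1 := by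
  rcases x with a | ⟨g, p, hp⟩
  · exact absurd ⟨a, (copy_apply f 1 a).trans (congrArg base (one_smul H a))⟩ hx
  · exact mul_eq_right.1 (point.inj hfix).1

theorem copy_eq_copy {h h' : H} {p p' : P} (heq : copy f h p = copy f h' p') :
    (∃ a a', p = f a ∧ p' = f a' ∧ h • a = h' • a') ∨ p ∉ Set.range f ∧ h = h' ∧ p = p' := by
  by_cases hp : p ∈ Set.range f <;> by_cases hp' : p' ∈ Set.range f
  · obtain ⟨⟨a, rfl⟩, ⟨a', rfl⟩⟩ := And.intro hp hp'
    rw [copy_apply, copy_apply] at heq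
    exact .inl ⟨a, a', rfl, rfl, base.inj heq⟩
  · obtain ⟨a, rfl⟩ := hp
    rw [copy_apply, copy_of_notMem_range f h' hp'] at heq
    cases heq
  · obtain ⟨a', rfl⟩ := hp'
    rw [copy_apply, copy_of_notMem_range f h hp] at heq
    cases heq
  · rw [copy_of_notMem_range f h hp, copy_of_notMem_range f h' hp'] at heq
    cases heq
    exact .inr ⟨hp, rfl, rfl⟩

theorem copy_injective (h : H) : Function.Injective (copy f h) := by
  intro p p' heq
  obtain ⟨a, a', rfl, rfl, haa'⟩ | ⟨-, -, hpp'⟩ := copy_eq_copy heq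
  · exact congrArg f (MulAction.injective h haa')
  · exact hpp'

theorem copy_comp_eq_copy_comp {ι : Type*} {h h' : H} {w w' : ι → P}
    (heq : copy f h ∘ w = copy f h' ∘ w') :
    (∃ a a' : ι → A, w = f ∘ a ∧ w' = f ∘ a' ∧ h • a = h' • a') ∨ h = h' ∧ w = w' := by
  by_cases hw : ∀ i, w i ∈ Set.range f
  · have hcommon (i : ι) : ∃ a a', w i = f a ∧ w' i = f a' ∧ h • a = h' • a' :=
      (copy_eq_copy (congrFun heq i)).resolve_right fun hi ↦ hi.1 (hw i)
    choose a a' ha ha' haa' using hcommon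
    exact .inl ⟨a, a', funext ha, funext ha', funext haa'⟩
  · obtain ⟨i, hi⟩ := not_forall.1 hw
    obtain ⟨a, -, ha, -⟩ | ⟨-, rfl, -⟩ := copy_eq_copy (congrFun heq i)
    · exact absurd ⟨a, ha.symm⟩ hi
    · exact .inr ⟨rfl, (copy_injective h).comp_left heq⟩

variable [L.IsRelational]

instance : L.Structure (FreeAmalgam f H) where
  funMap g := isEmptyElim g
  RelMap R t := ∃ (h : H) (w : Fin _ → P), Structure.RelMap R w ∧ copy f h ∘ w = t

theorem preservesRelations : PreservesRelations L H (FreeAmalgam f H) := by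
  refine .of_forall_relMap_smul ?_
  rintro g n R _ ⟨h, w, hw, rfl⟩
  exact ⟨g * h, w, hw, funext fun i ↦ (smul_copy f g h (w i)).symm⟩

theorem relMap_copy_comp (hA : PreservesRelations L H A) (h : H) {n : ℕ} (R : L.Relations n)
    (w : Fin n → P) : Structure.RelMap R (copy f h ∘ w) ↔ Structure.RelMap R w := by
  refine ⟨?_, fun hw ↦ ⟨h, w, hw, rfl⟩⟩
  rintro ⟨h', w', hw', heq⟩
  obtain ⟨a', a, rfl, rfl, haa'⟩ | ⟨-, rfl⟩ := copy_comp_eq_copy_comp heq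
  · rwa [f.map_rel, ← hA h, ← haa', hA h', ← f.map_rel]
  · exact hw'

/-- `FreeAmalgam.copy` as an embedding of structures. -/
noncomputable def copyEmbedding (f : A ↪[L] P) (hA : PreservesRelations L H A) (h : H) :
    P ↪[L] FreeAmalgam f H where
  toFun := copy f h
  inj' := copy_injective h
  map_fun' g := isEmptyElim g
  map_rel' := relMap_copy_comp hA h

theorem model (hA : PreservesRelations L H A) {Φ : L.Theory} (hΦ : ∀ φ ∈ Φ, IsLocalSentence φ)
    (hP : P ⊨ Φ) : FreeAmalgam f H ⊨ Φ := by
  refine Theory.model_iff _ |>.2 fun φ hφ ↦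
    (hΦ φ hφ).realize_of_relMap_lifts (P := P) ?_ (Theory.model_iff _ |>.1 hP φ hφ)
  rintro n R _ ⟨h, w, -, rfl⟩
  exact ⟨copyEmbedding f hA h, w, rfl⟩

theorem exists_embedding_copy_one_eq [Finite P] [Finite H]
    (hA : PreservesRelations L H A) {Φ : L.Theory} (hΦ : ∀ φ ∈ Φ, IsLocalSentence φ)
    {F : Type} [L.Structure F] (hF : L.IsUltrahomogeneous F)
    (hage : L.age F = toBundled L {A : FinStruc L | ∀ φ ∈ Φ, A.Sat φ}) (j : P ↪[L] F) :
    ∃ e : FreeAmalgam f H ↪[L] F, ∀ p : P, e (copy f 1 p) = j p := by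
  have hP : P ⊨ Φ := (model_iff_nonempty_embedding_of_age_eq hage P).2 ⟨j⟩
  have : Nonempty (FreeAmalgam f H ↪[L] F) :=
    (model_iff_nonempty_embedding_of_age_eq hage _).1 (model hA hΦ hP)
  obtain ⟨e, he⟩ := hF.extend_embedding Structure.FG.of_finite j (copyEmbedding f hA 1)
  exact ⟨e, fun p ↦ (DFunLike.congr_fun he p).symm⟩

end FreeAmalgam

theorem statement_14_general [L.IsRelational] {Φ : L.Theory} (hΦ : ∀ φ ∈ Φ, IsLocalSentence φ)
    {F : Type} [L.Structure F] (hF : L.IsUltrahomogeneous F)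
    (hage : L.age F = toBundled L {A : FinStruc L | ∀ φ ∈ Φ, A.Sat φ})
    {H : Type*} [Group H] [Finite H] {S X : Set F} (hS : S.Finite) (hX : X.Finite)
    {ρ : H → F → F} (hρ : ActsOn L F H ρ S) :
    ∃ S' : Set F, S'.Finite ∧ S ∪ X ⊆ S' ∧
      ∃ ρ' : H → F → F, ActsOn L F H ρ' S' ∧
        (∀ h : H, ∀ x ∈ S, ρ' h x = ρ h x) ∧
        (∀ h : H, ∀ x ∈ S' \ S, ρ' h x = x → h = 1) := by
  let A : L.Substructure F := ⟨S, fun g ↦ isEmptyElim g⟩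
  let P : L.Substructure F := ⟨S ∪ X, fun g ↦ isEmptyElim g⟩
  have : Finite P := hS.union hX
  let : MulAction H A := ActsOn.mulAction hρ
  let f : A ↪[L] P := Substructure.inclusion (Set.subset_union_left : S ⊆ S ∪ X)
  obtain ⟨e, he⟩ := FreeAmalgam.exists_embedding_copy_one_eq (f := f)
    (ActsOn.preservesRelations hρ) hΦ hF hage P.subtype
  have he_copy (a : A) : e (FreeAmalgam.copy f 1 (f a)) = a := he (f a)
  refine ⟨Set.range e, Set.finite_range e, fun x hx ↦ ⟨_, he ⟨x, hx⟩⟩, _,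
    FreeAmalgam.preservesRelations.actsOn_range e, fun h x hx ↦ ?_, ?_⟩
  · let a : A := ⟨x, hx⟩
    calc transportAction e h x
        = transportAction e h (e (FreeAmalgam.copy f 1 (f a))) := by rw [he_copy a]
      _ = e (h • FreeAmalgam.copy f 1 (f a)) := transportAction_apply e.injective ..
      _ = (h • a : A) := by rw [FreeAmalgam.smul_copy_one_apply, he_copy]
  · rintro h _ ⟨⟨y, rfl⟩, hy⟩ hfix
    rw [transportAction_apply e.injective, e.injective.eq_iff] at hfix
    refine FreeAmalgam.eq_one_of_smul_eq_self ?_ hfix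
    rintro ⟨a, rfl⟩
    exact hy (he_copy a ▸ a.2)

/-- Any action of a finite group on a finite induced substructure of the Fraïssé limit of a
local class with symmetric relations extends, for any further vertex `v`, to an action on a
larger finite induced substructure with trivial stabilizers on the new points. -/
theorem statement_14 (L : FirstOrder.Language.{u, v}) [L.IsRelational]
    [∀ n, Finite (L.Relations n)] [Countable (Σ l, L.Functions l)]
    (K : Set (FinStruc L)) (hK : IsLocalClass K) (hsym : SymmetricClass K)
    (F : Type) [L.Structure F] [Countable F] (hF : IsFraisseLimit (toBundled L K) F)
    (H : Type) [Group H] [Finite H]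
    (S : Set F) (hS : S.Finite) (v : F) (hv : v ∉ S)
    (ρ : H → F → F) (hρ : ActsOn L F H ρ S) :
    ∃ S' : Set F, S'.Finite ∧ S ∪ {v} ⊆ S' ∧
      ∃ ρ' : H → F → F, ActsOn L F H ρ' S' ∧
        (∀ h : H, ∀ x ∈ S, ρ' h x = ρ h x) ∧
        (∀ h : H, ∀ x ∈ S' \ S, ρ' h x = x → h = 1) := by
  obtain ⟨Φ, hΦ, -, rfl⟩ := hK
  exact statement_14_general hΦ hF.ultrahomogeneous hF.age hS (Set.finite_singleton v) hρ
end

section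
/- Let V be a finite set, Δ a simplicial complex on V, v a vertex of Δ, n a natural number, and φ : |Δ| → ℝ^{n+1} a piecewise linear map such that φ(e_v) = (0,…,0,1) and the restriction of φ to the realisation of the induced subcomplex of Δ on V ∖ {v} is a homeomorphism onto the standard (n−1)-simplex. Then there exist a finite set V' ⊇ V, a simplicial complex Δ' on V' whose induced subcomplex on V is Δ, and a piecewise linear map φ' : |Δ'| → ℝ^{n+1} that is a homeomorphism onto the standard n-simplex in ℝ^{n+1} and whose restriction to |Δ| coincides with φ. -/
/-- The geometric realisation of a simplicial complex `Δ` (a set of finite subsets of `V`): the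
union over the faces `F ∈ Δ` of the convex hulls of the corresponding sets of standard basis
vectors in `ℝ^V`. -/
noncomputable def geomReal (V : Type*) [DecidableEq V] (Δ : Set (Finset V)) : Set (V → ℝ) :=
  ⋃ F ∈ Δ, convexHull ℝ ((fun v => Pi.single v (1 : ℝ)) '' (F : Set V))

/-- The topology of the geometric realisation: a set is open if and only if its intersection
with `ℝ^W` (the points supported on `W`) is open for every finite `W ⊆ V`. -/
noncomputable def geomTop (V : Type*) [DecidableEq V] (Δ : Set (Finset V)) :
    TopologicalSpace (geomReal V Δ) :=
  ⨆ W : Finset V,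
    TopologicalSpace.coinduced
      (fun x : { y : geomReal V Δ // ∀ v : V, v ∉ W → (y : V → ℝ) v = 0 } => x.1)
      inferInstance

/-- The piecewise linear map on `ℝ^V` determined by the vertex images `g v`: each point, given
by its barycentric coordinates, is sent to the corresponding affine combination of the vertex
images.  Piecewise linear maps on the realisation of a simplicial complex are exactly the
restrictions of such maps. -/
noncomputable def plMap {V : Type*} {m : ℕ} (g : V → Fin m → ℝ) (x : V → ℝ) : Fin m → ℝ :=
  ∑ᶠ v, x v • g v

/-- The standard `(k-1)`-simplex inside `ℝ^m`: the convex hull of the first `k` standard basis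
vectors. -/
noncomputable def stdSimplexIn (m k : ℕ) : Set (Fin m → ℝ) :=
  convexHull ℝ { p : Fin m → ℝ | ∃ i : Fin m, (i : ℕ) < k ∧ p = Pi.single i 1 }

/-- `Δ` is a simplicial complex on the finite vertex set `s`: all faces are subsets of `s` and
faces are closed under taking subsets. -/
def IsComplexOn (V : Type*) (s : Finset V) (Δ : Set (Finset V)) : Prop :=
  (∀ F ∈ Δ, F ⊆ s) ∧ ∀ F ∈ Δ, ∀ G ⊆ F, G ∈ Δ

/-!
Put `L = {F ∈ Δ | v ∉ F}`. As `φ(e_v)` lies outside the affine span of `φ(|L|)`, the map `φ` is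
injective on the cone `v * L` and carries it onto the pyramid with base `φ(|L|)` and apex `φ(e_v)`.
The cone contains `Δ`, but may have further faces `G` with vertices in `V`. Such a face is removed
by a stellar subdivision at its barycentre `b`: mapping `b` to the barycentre of the image of `G`
changes neither the map nor its image, and afterwards the faces with vertices in `V` are exactly the
old ones not containing `G`. No face of `Δ` contains `G`, so finitely many such steps leave `Δ`.
-/

open Set

section Topology

variable {X Y : Type*} [TopologicalSpace X] [TopologicalSpace Y]

theorem bijOn_of_homeomorph {f : X → Y} {A : Set X} {B : Set Y} (e : A ≃ₜ B)
    (he : ∀ x : A, (e x : Y) = f x) : BijOn f A B := by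
  refine ⟨fun x hx => he ⟨x, hx⟩ ▸ (e ⟨x, hx⟩).2, fun x hx y hy hxy => ?_, fun y hy => ?_⟩
  · have : e ⟨x, hx⟩ = e ⟨y, hy⟩ := Subtype.ext (by simpa only [he] using hxy)
    exact congrArg Subtype.val (e.injective this)
  · obtain ⟨x, hx⟩ := e.surjective ⟨y, hy⟩
    exact ⟨x, x.2, by rw [← he, hx]⟩

theorem exists_homeomorph_iff_bijOn [T2Space Y] {f : X → Y} {A : Set X} {B : Set Y}
    (hA : IsCompact A) (hf : ContinuousOn f A) :
    (∃ e : A ≃ₜ B, ∀ x : A, (e x : Y) = f x) ↔ BijOn f A B := by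
  refine ⟨fun ⟨e, he⟩ => bijOn_of_homeomorph e he, fun h => ?_⟩
  have := isCompact_iff_compactSpace.1 hA
  have hcont : Continuous (h.equiv f) := hf.domRestrict.subtype_mk _
  exact ⟨hcont.homeoOfEquivCompactToT2, fun _ => rfl⟩

end Topology

section Pyramid

variable {E F : Type*} [AddCommGroup E] [Module ℝ E] [AddCommGroup F] [Module ℝ F]

/-- The pyramid with apex `p` and base `B`. The apex is adjoined separately, so that the pyramid
over the empty base is `{p}` and every other point is `(1 - t) b + t p` for some `t < 1`. -/
def pyramid (p : E) (B : Set E) : Set E :=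
  {y | y = p ∨ ∃ b ∈ B, ∃ t ∈ Ico (0 : ℝ) 1, AffineMap.lineMap b p t = y}

theorem pyramid_biUnion {ι : Type*} (p : E) {I : Set ι} (hI : I.Nonempty) (B : ι → Set E) :
    pyramid p (⋃ i ∈ I, B i) = ⋃ i ∈ I, pyramid p (B i) := by
  obtain ⟨i₀, hi₀⟩ := hI
  ext y
  simp only [pyramid, mem_iUnion, mem_ofPred_eq, exists_prop]
  constructor
  · rintro (rfl | ⟨b, ⟨i, hi, hb⟩, hy⟩)
    · exact ⟨i₀, hi₀, Or.inl rfl⟩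
    · exact ⟨i, hi, Or.inr ⟨b, hb, hy⟩⟩
  · rintro ⟨i, hi, rfl | ⟨b, hb, hy⟩⟩
    · exact Or.inl rfl
    · exact Or.inr ⟨b, ⟨i, hi, hb⟩, hy⟩

theorem convexHull_insert_eq_pyramid (p : E) (A : Set E) :
    convexHull ℝ (insert p A) = pyramid p (convexHull ℝ A) := by
  rcases A.eq_empty_or_nonempty with rfl | hA
  · ext y
    simp [pyramid]
  · ext y
    simp_rw [convexHull_insert hA, mem_convexJoin, mem_singleton_iff, exists_eq_left,
      segment_symm ℝ p, segment_eq_image_lineMap, pyramid, mem_ofPred_eq, mem_image]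
    constructor
    · rintro ⟨b, hb, t, ⟨ht0, ht1⟩, rfl⟩
      rcases ht1.eq_or_lt with rfl | ht1
      · exact Or.inl (AffineMap.lineMap_apply_one b p)
      · exact Or.inr ⟨b, hb, t, ⟨ht0, ht1⟩, rfl⟩
    · rintro (rfl | ⟨b, hb, t, ht, rfl⟩)
      · obtain ⟨b, hb⟩ := hA.convexHull (𝕜 := ℝ)
        exact ⟨b, hb, 1, right_mem_Icc.2 zero_le_one, AffineMap.lineMap_apply_one b y⟩
      · exact ⟨b, hb, t, Ico_subset_Icc_self ht, rfl⟩

theorem eq_and_eq_of_lineMap_eq_lineMap {p b c : E} {B : Set E} (hp : p ∉ affineSpan ℝ B)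
    (hb : b ∈ B) (hc : c ∈ B) {t u : ℝ} (ht : t ≠ 1)
    (h : AffineMap.lineMap b p t = AffineMap.lineMap c p u) : b = c ∧ t = u := by
  have htu : t = u := by
    by_contra hne
    have hne' : t - u ≠ 0 := sub_ne_zero.2 hne
    have hpbc : AffineMap.lineMap b c ((1 - u) / (t - u)) = p := by
      simp only [AffineMap.lineMap_apply_module] at h ⊢
      have hlin : (t - u) • p = (1 - u) • c - (1 - t) • b := by
        linear_combination (norm := module) h
      rw [← inv_smul_smul₀ hne' p, hlin]
      match_scalars <;> field_simp
      ring
    exact hp (hpbc ▸ AffineMap.lineMap_mem _ (mem_affineSpan ℝ hb) (mem_affineSpan ℝ hc))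
  subst htu
  refine ⟨?_, rfl⟩
  simp only [AffineMap.lineMap_apply_module, add_left_inj] at h
  exact smul_right_injective E (sub_ne_zero.2 ht.symm) h

theorem bijOn_pyramid {f : E → F} {p : E} {B : Set E} {C : Set F}
    (hf : ∀ b ∈ B, ∀ t : ℝ, f (AffineMap.lineMap b p t) = AffineMap.lineMap (f b) (f p) t)
    (hp : f p ∉ affineSpan ℝ C) (hB : BijOn f B C) :
    BijOn f (pyramid p B) (pyramid (f p) C) := by
  have apex_ne : ∀ b ∈ B, ∀ t ∈ Ico (0 : ℝ) 1, f p ≠ f (AffineMap.lineMap b p t) := by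
    intro b hb t ht h
    rw [hf b hb, eq_comm, AffineMap.lineMap_eq_right_iff, or_iff_left ht.2.ne] at h
    exact hp (h ▸ mem_affineSpan ℝ (hB.mapsTo hb))
  refine ⟨?_, ?_, ?_⟩
  · rintro x (rfl | ⟨b, hb, t, ht, rfl⟩)
    · exact Or.inl rfl
    · exact Or.inr ⟨f b, hB.mapsTo hb, t, ht, (hf b hb t).symm⟩
  · rintro x (rfl | ⟨b, hb, t, ht, rfl⟩) y (rfl | ⟨c, hc, u, hu, rfl⟩) h
    · rfl
    · exact absurd h (apex_ne c hc u hu)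
    · exact absurd h.symm (apex_ne b hb t ht)
    · rw [hf b hb, hf c hc] at h
      obtain ⟨hbc, rfl⟩ :=
        eq_and_eq_of_lineMap_eq_lineMap hp (hB.mapsTo hb) (hB.mapsTo hc) ht.2.ne h
      rw [hB.injOn hb hc hbc]
  · rintro y (rfl | ⟨c, hc, t, ht, rfl⟩)
    · exact ⟨p, Or.inl rfl, rfl⟩
    · obtain ⟨b, hb, rfl⟩ := hB.surjOn hc
      exact ⟨AffineMap.lineMap b p t, Or.inr ⟨b, hb, t, ht, rfl⟩, hf b hb t⟩

end Pyramid

section StdSimplex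

theorem stdSimplexIn_succ_eq_pyramid (n : ℕ) :
    stdSimplexIn (n + 1) (n + 1) =
      pyramid (Pi.single (Fin.last n) 1) (stdSimplexIn (n + 1) n) := by
  rw [stdSimplexIn, stdSimplexIn, ← convexHull_insert_eq_pyramid]
  congr 1
  ext p
  simp [Fin.exists_fin_succ', or_comm]

theorem single_last_notMem_affineSpan_stdSimplexIn (n : ℕ) :
    (Pi.single (Fin.last n) 1 : Fin (n + 1) → ℝ) ∉ affineSpan ℝ (stdSimplexIn (n + 1) n) := by
  let H : Submodule ℝ (Fin (n + 1) → ℝ) := LinearMap.ker (LinearMap.proj (Fin.last n))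
  have hle : affineSpan ℝ (stdSimplexIn (n + 1) n) ≤ H.toAffineSubspace := by
    rw [stdSimplexIn, affineSpan_convexHull, affineSpan_le]
    rintro _ ⟨i, hi, rfl⟩
    have : Fin.last n ≠ i := by rintro rfl; simp at hi
    simp [H, this]
  intro h
  simpa [H] using hle h

end StdSimplex

section SimplicialComplex

variable {V : Type*}

theorem finite_of_forall_subset {Δ : Set (Finset V)} {s : Finset V}
    (hΔ : ∀ F ∈ Δ, F ⊆ s) : Δ.Finite :=
  s.powerset.finite_toSet.subset fun F hF => Finset.mem_coe.2 (Finset.mem_powerset.2 (hΔ F hF))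

section PlMap

variable {m : ℕ} (g : V → Fin m → ℝ)

theorem plMap_eq_sum {x : V → ℝ} {s : Finset V} (hx : ∀ w ∉ s, x w = 0) :
    plMap g x = ∑ w ∈ s, x w • g w := by
  refine finsum_eq_sum_of_support_subset _ fun w hw => ?_
  by_contra h
  exact hw (by simp [hx w h])

theorem plMap_coe (x : V →₀ ℝ) : plMap g x = Finsupp.linearCombination ℝ g x :=
  plMap_eq_sum g fun _ => Finsupp.notMem_support_iff.1

theorem plMap_single [DecidableEq V] (v : V) : plMap g (Pi.single v 1) = g v := by
  rw [← Finsupp.single_eq_pi_single, plMap_coe, Finsupp.linearCombination_single, one_smul]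

theorem plMap_congr {g h : V → Fin m → ℝ} {s : Finset V} (hgh : EqOn g h s) {x : V → ℝ}
    (hx : ∀ w ∉ s, x w = 0) : plMap g x = plMap h x := by
  rw [plMap_eq_sum g hx, plMap_eq_sum h hx]
  exact Finset.sum_congr rfl fun w hw => by rw [hgh hw]

theorem plMap_lineMap {x y : V → ℝ} (hx : x.support.Finite) (hy : y.support.Finite) (t : ℝ) :
    plMap g (AffineMap.lineMap x y t) = AffineMap.lineMap (plMap g x) (plMap g y) t := by
  lift x to V →₀ ℝ using hx
  lift y to V →₀ ℝ using hy
  simp only [AffineMap.lineMap_apply_module, ← Finsupp.coe_smul, ← Finsupp.coe_add, plMap_coe,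
    map_add, map_smul]

theorem plMap_update [DecidableEq V] (b : V) (p : Fin m → ℝ) {x : V → ℝ}
    (hx : x.support.Finite) :
    plMap (Function.update g b p) x = plMap g x + x b • (p - g b) := by
  have hsupp : ∀ w ∉ insert b hx.toFinset, x w = 0 := by simp
  rw [plMap_eq_sum _ hsupp, plMap_eq_sum g hsupp,
    ← Finset.add_sum_erase _ _ (Finset.mem_insert_self b _),
    ← Finset.add_sum_erase _ (fun w => x w • g w) (Finset.mem_insert_self b _)]
  have hoff : ∀ w ∈ (insert b hx.toFinset).erase b,
      x w • Function.update g b p w = x w • g w := fun w hw => by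
    rw [Function.update_of_ne (Finset.ne_of_mem_erase hw)]
  rw [Finset.sum_congr rfl hoff, Function.update_self]
  module

end PlMap

section Barycenter

/-- The barycentre of the simplex spanned by `G`, as a vector of barycentric coordinates. -/
noncomputable def barycenter (G : Finset V) : V →₀ ℝ :=
  Finsupp.indicator G fun _ _ => (G.card : ℝ)⁻¹

variable {G s : Finset V}

theorem barycenter_of_mem {w : V} (hw : w ∈ G) : barycenter G w = (G.card : ℝ)⁻¹ :=
  Finsupp.indicator_of_mem hw _

theorem barycenter_of_notMem {w : V} (hw : w ∉ G) : barycenter G w = 0 :=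
  Finsupp.indicator_of_notMem hw _

theorem barycenter_pos {w : V} (hw : w ∈ G) : 0 < barycenter G w := by
  rw [barycenter_of_mem hw]
  exact inv_pos.2 (Nat.cast_pos.2 (Finset.card_pos.2 ⟨w, hw⟩))

theorem barycenter_nonneg (w : V) : 0 ≤ barycenter G w := by
  by_cases hw : w ∈ G
  · exact (barycenter_pos hw).le
  · rw [barycenter_of_notMem hw]

theorem sum_barycenter (hG : G.Nonempty) (hGs : G ⊆ s) : ∑ w ∈ s, barycenter G w = 1 := by
  rw [← Finset.sum_subset hGs fun w _ => barycenter_of_notMem,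
    Finset.sum_congr rfl fun w => barycenter_of_mem, Finset.sum_const, nsmul_eq_mul]
  exact mul_inv_cancel₀ (Nat.cast_ne_zero.2 hG.card_ne_zero)

end Barycenter

variable [DecidableEq V]

section GeomReal

theorem mem_convexHull_single_image {F : Finset V} {x : V → ℝ} :
    x ∈ convexHull ℝ ((fun v => Pi.single v (1 : ℝ)) '' (F : Set V)) ↔
      0 ≤ x ∧ (∀ w ∉ F, x w = 0) ∧ ∑ w ∈ F, x w = 1 := by
  constructor
  · have hconv : Convex ℝ {x : V → ℝ | 0 ≤ x ∧ (∀ w ∉ F, x w = 0) ∧ ∑ w ∈ F, x w = 1} := by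
      rintro x ⟨hx0, hxF, hx1⟩ y ⟨hy0, hyF, hy1⟩ a c ha hc hac
      refine ⟨add_nonneg (smul_nonneg ha hx0) (smul_nonneg hc hy0), fun w hw => ?_, ?_⟩
      · simp [hxF w hw, hyF w hw]
      · simp [Finset.sum_add_distrib, ← Finset.mul_sum, hx1, hy1, hac]
    refine fun hx => convexHull_min ?_ hconv hx
    rintro _ ⟨u, hu, rfl⟩
    have hu : u ∈ F := hu
    refine ⟨Pi.single_nonneg.2 zero_le_one, fun w hw => ?_, ?_⟩
    · exact Pi.single_eq_of_ne (ne_of_mem_of_not_mem hu hw).symm 1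
    · simp [hu]
  · rintro ⟨hx0, hxF, hx1⟩
    have hsum : x = ∑ w ∈ F, x w • (Pi.single w 1 : V → ℝ) := by
      ext u
      by_cases hu : u ∈ F <;> simp [Finset.sum_apply, Pi.single_apply, hu, hxF]
    rw [hsum]
    exact (convex_convexHull ℝ _).sum_mem (fun w _ => hx0 w) hx1 fun w hw =>
      subset_convexHull ℝ _ (mem_image_of_mem _ hw)

variable {Δ : Set (Finset V)} {s : Finset V}

theorem mem_geomReal_iff (hΔ : ∀ F ∈ Δ, F ⊆ s) {x : V → ℝ} :
    x ∈ geomReal V Δ ↔ 0 ≤ x ∧ ∑ w ∈ s, x w = 1 ∧ ∃ F ∈ Δ, ∀ w ∉ F, x w = 0 := by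
  simp only [geomReal, mem_iUnion, exists_prop, mem_convexHull_single_image]
  constructor
  · rintro ⟨F, hF, hx0, hxF, hx1⟩
    exact ⟨hx0, hx1 ▸ (Finset.sum_subset (hΔ F hF) fun w _ => hxF w).symm, F, hF, hxF⟩
  · rintro ⟨hx0, hx1, F, hF, hxF⟩
    exact ⟨F, hF, hx0, hxF, hx1 ▸ Finset.sum_subset (hΔ F hF) fun w _ => hxF w⟩

theorem eq_zero_of_mem_geomReal (hΔ : ∀ F ∈ Δ, F ⊆ s) {x : V → ℝ} (hx : x ∈ geomReal V Δ) :
    ∀ w ∉ s, x w = 0 := by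
  obtain ⟨-, -, F, hF, hxF⟩ := (mem_geomReal_iff hΔ).1 hx
  exact fun w hw => hxF w fun hwF => hw (hΔ F hF hwF)

theorem finite_support_of_mem_geomReal {x : V → ℝ} (hx : x ∈ geomReal V Δ) :
    x.support.Finite := by
  obtain ⟨F, -, hxF⟩ := mem_iUnion₂.1 hx
  obtain ⟨-, hxF, -⟩ := mem_convexHull_single_image.1 hxF
  exact F.finite_toSet.subset (Function.support_subset_iff'.2 hxF)

theorem isCompact_geomReal (hΔ : ∀ F ∈ Δ, F ⊆ s) : IsCompact (geomReal V Δ) :=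
  (finite_of_forall_subset hΔ).isCompact_biUnion fun F _ =>
    (F.finite_toSet.image _).isCompact_convexHull (𝕜 := ℝ)

theorem continuousOn_plMap (hΔ : ∀ F ∈ Δ, F ⊆ s) {m : ℕ} (g : V → Fin m → ℝ) :
    ContinuousOn (plMap g) (geomReal V Δ) := by
  have hsum : ContinuousOn (fun x : V → ℝ => ∑ w ∈ s, x w • g w) (geomReal V Δ) := by fun_prop
  exact hsum.congr fun x hx => plMap_eq_sum g (eq_zero_of_mem_geomReal hΔ hx)

theorem geomTop_eq_subspace (hΔ : ∀ F ∈ Δ, F ⊆ s) :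
    geomTop V Δ = (inferInstance : TopologicalSpace (geomReal V Δ)) := by
  refine le_antisymm (iSup_le fun W => ?_) (le_trans (fun U hU => ?_) (le_iSup _ s))
  · exact continuous_iff_coinduced_le.1 continuous_subtype_val
  · exact (isOpen_coinduced.1 hU).preimage
      (continuous_id.subtype_mk fun y => eq_zero_of_mem_geomReal hΔ y.2)

theorem exists_geomTop_homeomorph_iff_bijOn (hΔ : ∀ F ∈ Δ, F ⊆ s) {m : ℕ}
    (g : V → Fin m → ℝ) (T : Set (Fin m → ℝ)) :
    (∃ e : @Homeomorph (geomReal V Δ) T (geomTop V Δ) inferInstance,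
        ∀ x : geomReal V Δ, (e x : Fin m → ℝ) = plMap g (x : V → ℝ)) ↔
      BijOn (plMap g) (geomReal V Δ) T := by
  rw [geomTop_eq_subspace hΔ]
  exact exists_homeomorph_iff_bijOn (isCompact_geomReal hΔ) (continuousOn_plMap hΔ g)

end GeomReal

section Cone

/-- The cone `v * Δ` with apex `v` over a simplicial complex `Δ` not having `v` as a vertex. -/
def coneComplex (v : V) (Δ : Set (Finset V)) : Set (Finset V) :=
  {F | F.erase v ∈ Δ}

variable {v : V} {Δ : Set (Finset V)} {s : Finset V}

theorem isComplexOn_coneComplex (hΔ : IsComplexOn V s Δ) :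
    IsComplexOn V (insert v s) (coneComplex v Δ) :=
  ⟨fun _ hF => Finset.subset_insert_iff.2 (hΔ.1 _ hF),
    fun F hF _ hG => hΔ.2 (F.erase v) hF _ (Finset.erase_subset_erase v hG)⟩

theorem geomReal_coneComplex (hv : ∀ F ∈ Δ, v ∉ F) (hΔ : Δ.Nonempty) :
    geomReal V (coneComplex v Δ) = pyramid (Pi.single v 1) (geomReal V Δ) := by
  have hjoin : geomReal V (coneComplex v Δ) =
      ⋃ F ∈ Δ, convexHull ℝ ((fun w => Pi.single w (1 : ℝ)) '' (↑(insert v F) : Set V)) := by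
    ext x
    simp only [geomReal, mem_iUnion, exists_prop]
    constructor
    · rintro ⟨F, hF, hx⟩
      have hsub : F ⊆ insert v (F.erase v) := Finset.insert_erase_subset v F
      exact ⟨F.erase v, hF, convexHull_mono (image_mono (Finset.coe_subset.2 hsub)) hx⟩
    · rintro ⟨F, hF, hx⟩
      exact ⟨insert v F, by rwa [coneComplex, mem_ofPred_eq, Finset.erase_insert (hv F hF)], hx⟩
  simp only [hjoin, Finset.coe_insert, image_insert_eq, convexHull_insert_eq_pyramid]
  exact (pyramid_biUnion _ hΔ _).symm

theorem bijOn_plMap_coneComplex (hv : ∀ F ∈ Δ, v ∉ F) (hΔ : Δ.Nonempty) {m : ℕ}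
    {g : V → Fin m → ℝ} {B : Set (Fin m → ℝ)} (hgv : g v ∉ affineSpan ℝ B)
    (hg : BijOn (plMap g) (geomReal V Δ) B) :
    BijOn (plMap g) (geomReal V (coneComplex v Δ)) (pyramid (g v) B) := by
  rw [← plMap_single g v] at hgv ⊢
  rw [geomReal_coneComplex hv hΔ]
  refine bijOn_pyramid (fun x hx t => ?_) hgv hg
  exact plMap_lineMap g (finite_support_of_mem_geomReal hx) ((finite_singleton v).subset
    Pi.support_single_subset) t

end Cone

section Stellar

/-- The stellar subdivision of the complex `K` at the face `G`, with new vertex `b`: the faces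
containing `G` are removed and `b` is joined to the boundary of the closed star of `G`. -/
def stellar (K : Set (Finset V)) (G : Finset V) (b : V) : Set (Finset V) :=
  {F | ¬ G ⊆ F ∧ (F ∈ K ∨ b ∈ F ∧ F.erase b ∪ G ∈ K)}

/-- The map of realisations identifying the stellar subdivision at `G` with the original complex:
it is linear, sends the new vertex `b` to the barycentre of `G` and fixes all other vertices. -/
noncomputable def stellarMap (G : Finset V) (b : V) (x : V → ℝ) : V → ℝ :=
  x + x b • (⇑(barycenter G) - Pi.single b 1)

variable {K : Set (Finset V)} {s G : Finset V} {b : V}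

theorem isComplexOn_stellar (hK : IsComplexOn V s K) :
    IsComplexOn V (insert b s) (stellar K G b) := by
  constructor
  · rintro F ⟨-, hF | ⟨-, hF⟩⟩
    · exact (hK.1 F hF).trans (Finset.subset_insert b s)
    · exact Finset.subset_insert_iff.2 (Finset.union_subset_left (hK.1 _ hF))
  · rintro F ⟨hGF, hF⟩ H hHF
    refine ⟨fun hGH => hGF (hGH.trans hHF), ?_⟩
    rcases hF with hF | ⟨-, hF⟩
    · exact Or.inl (hK.2 F hF H hHF)
    · by_cases hbH : b ∈ H
      · exact Or.inr ⟨hbH, hK.2 _ hF _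
          (Finset.union_subset_union_left (Finset.erase_subset_erase b hHF))⟩
      · refine Or.inl (hK.2 _ hF H ?_)
        exact (Finset.subset_erase.2 ⟨hHF, hbH⟩).trans Finset.subset_union_left

theorem setOf_stellar_subset {t : Finset V} (hb : b ∉ t) :
    {F ∈ stellar K G b | F ⊆ t} = {F ∈ K | F ⊆ t ∧ ¬ G ⊆ F} := by
  ext F
  simp only [stellar, mem_ofPred_eq]
  constructor
  · rintro ⟨⟨hGF, hF | ⟨hbF, -⟩⟩, hFt⟩
    · exact ⟨hF, hFt, hGF⟩
    · exact absurd (hFt hbF) hb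
  · rintro ⟨hF, hFt, hGF⟩
    exact ⟨⟨hGF, Or.inl hF⟩, hFt⟩

theorem ncard_stellar_diff_lt {Δ : Set (Finset V)} {t : Finset V} (hGK : G ∈ K) (hGt : G ⊆ t)
    (hGΔ : G ∉ Δ) (hb : b ∉ t) :
    ({F ∈ stellar K G b | F ⊆ t} \ Δ).ncard < ({F ∈ K | F ⊆ t} \ Δ).ncard := by
  have hfin : ({F ∈ K | F ⊆ t} \ Δ).Finite := finite_of_forall_subset fun _ hF => hF.1.2
  have hsub : {F ∈ K | F ⊆ t ∧ ¬ G ⊆ F} \ Δ ⊆ {F ∈ K | F ⊆ t} \ Δ := fun _ hF =>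
    ⟨⟨hF.1.1, hF.1.2.1⟩, hF.2⟩
  rw [setOf_stellar_subset hb]
  exact ncard_lt_ncard ((ssubset_iff_of_subset hsub).2
    ⟨G, ⟨⟨hGK, hGt⟩, hGΔ⟩, fun hG => hG.1.2.2 subset_rfl⟩) hfin

theorem stellarMap_self (hb : b ∉ G) (x : V → ℝ) : stellarMap G b x b = 0 := by
  simp [stellarMap, barycenter_of_notMem hb]

theorem stellarMap_of_ne {w : V} (hw : w ≠ b) (x : V → ℝ) :
    stellarMap G b x w = x w + x b * barycenter G w := by
  simp [stellarMap, hw]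

theorem stellarMap_nonneg (hb : b ∉ G) {x : V → ℝ} (hx : 0 ≤ x) : 0 ≤ stellarMap G b x := by
  intro w
  rcases eq_or_ne w b with rfl | hw
  · exact (stellarMap_self hb x).ge
  · rw [stellarMap_of_ne hw]
    exact add_nonneg (hx w) (mul_nonneg (hx b) (barycenter_nonneg w))

theorem sum_stellarMap (hG : G.Nonempty) (hGs : G ⊆ s) (hb : b ∈ s) (x : V → ℝ) :
    ∑ w ∈ s, stellarMap G b x w = ∑ w ∈ s, x w := by
  simp [stellarMap, Finset.sum_add_distrib, ← Finset.mul_sum, sum_barycenter hG hGs, hb]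

theorem stellarMap_add_smul (hb : b ∉ G) {y : V → ℝ} (hy : y b = 0) (r : ℝ) :
    stellarMap G b (y + r • (Pi.single b 1 - ⇑(barycenter G))) = y := by
  have hr : (y + r • (Pi.single b 1 - ⇑(barycenter G)) : V → ℝ) b = r := by
    simp [hy, barycenter_of_notMem hb]
  rw [stellarMap, hr]
  module

theorem injOn_stellarMap (hb : b ∉ G) :
    InjOn (stellarMap G b) {x | 0 ≤ x ∧ ∃ w ∈ G, x w = 0} := by
  have apply_le {x y : V → ℝ} (hx : 0 ≤ x) (hy : ∃ w ∈ G, y w = 0)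
      (h : stellarMap G b x = stellarMap G b y) : x b ≤ y b := by
    obtain ⟨w, hw, hyw⟩ := hy
    have hcoord := congrFun h w
    have hwb : w ≠ b := ne_of_mem_of_not_mem hw hb
    rw [stellarMap_of_ne hwb, stellarMap_of_ne hwb, hyw, zero_add] at hcoord
    exact le_of_mul_le_mul_right (hcoord ▸ le_add_of_nonneg_left (hx w)) (barycenter_pos hw)
  rintro x ⟨hx0, hxG⟩ y ⟨hy0, hyG⟩ h
  have hxy : x b = y b := (apply_le hx0 hyG h).antisymm (apply_le hy0 hxG h.symm)
  rw [stellarMap, stellarMap, hxy] at h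
  exact add_right_cancel h

-- The preimage of `y` subtracts from the weights on `G` their minimum, and moves it to `b`.
theorem surjOn_stellarMap (hG : G.Nonempty) (hb : b ∉ G) :
    SurjOn (stellarMap G b) {x | 0 ≤ x ∧ ∃ w ∈ G, x w = 0} {y | 0 ≤ y ∧ y b = 0} := by
  rintro y ⟨hy0, hyb⟩
  obtain ⟨w₀, hw₀, hmin⟩ := G.exists_min_image y hG
  let r : ℝ := G.card * y w₀
  have hrG : ∀ w ∈ G, r * barycenter G w = y w₀ := fun w hw => by
    rw [barycenter_of_mem hw, mul_comm, inv_mul_cancel_left₀]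
    exact Nat.cast_ne_zero.2 hG.card_ne_zero
  let x : V → ℝ := y + r • (Pi.single b 1 - ⇑(barycenter G))
  have hxb : x b = r := by simp [x, hyb, barycenter_of_notMem hb]
  have hx : ∀ w ≠ b, x w = y w - r * barycenter G w := fun w hw => by
    simp [x, hw, sub_eq_add_neg]
  refine ⟨x, ⟨fun w => ?_, w₀, hw₀, ?_⟩, stellarMap_add_smul hb hyb r⟩
  · rcases eq_or_ne w b with rfl | hwb
    · exact hxb ▸ mul_nonneg G.card.cast_nonneg (hy0 w₀)
    by_cases hwG : w ∈ G
    · rw [hx w hwb, hrG w hwG]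
      exact sub_nonneg.2 (hmin w hwG)
    · rw [hx w hwb, barycenter_of_notMem hwG, mul_zero, sub_zero]
      exact hy0 w
  · rw [hx w₀ (ne_of_mem_of_not_mem hw₀ hb), hrG w₀ hw₀, sub_self]

theorem bijOn_stellarMap (hG : G.Nonempty) (hb : b ∉ G) :
    BijOn (stellarMap G b) {x | 0 ≤ x ∧ ∃ w ∈ G, x w = 0} {y | 0 ≤ y ∧ y b = 0} :=
  ⟨fun x hx => ⟨stellarMap_nonneg hb hx.1, stellarMap_self hb x⟩, injOn_stellarMap hb,
    surjOn_stellarMap hG hb⟩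

theorem exists_face_stellarMap (hK : IsComplexOn V s K) (hbG : b ∉ G) (hb : b ∉ s) {x : V → ℝ}
    (hx : ∃ F ∈ stellar K G b, ∀ w ∉ F, x w = 0) :
    ∃ H ∈ K, ∀ w ∉ H, stellarMap G b x w = 0 := by
  obtain ⟨F, ⟨-, hF⟩, hxF⟩ := hx
  rcases hF with hF | ⟨-, hF⟩
  · have hxb : x b = 0 := hxF b fun h => hb (hK.1 F hF h)
    exact ⟨F, hF, fun w hw => by simp [stellarMap, hxb, hxF w hw]⟩
  · refine ⟨_, hF, fun w hw => ?_⟩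
    rcases eq_or_ne w b with rfl | hwb
    · exact stellarMap_self hbG x
    · obtain ⟨hwF, hwG⟩ : w ∉ F ∧ w ∉ G := by simpa [hwb] using hw
      rw [stellarMap_of_ne hwb, hxF w hwF, barycenter_of_notMem hwG, mul_zero, add_zero]

theorem exists_face_stellar (hK : IsComplexOn V s K) (hbG : b ∉ G) {x : V → ℝ} (hx : 0 ≤ x)
    {u : V} (hu : u ∈ G) (hxu : x u = 0) (hxK : ∃ H ∈ K, ∀ w ∉ H, stellarMap G b x w = 0) :
    ∃ F ∈ stellar K G b, ∀ w ∉ F, x w = 0 := by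
  obtain ⟨H, hH, hxH⟩ := hxK
  have hub : u ≠ b := ne_of_mem_of_not_mem hu hbG
  rcases (hx b).eq_or_lt' with hxb | hxb
  · have hfix : stellarMap G b x = x := by simp [stellarMap, hxb]
    refine ⟨H.erase u, ⟨fun h => H.notMem_erase u (h hu),
      Or.inl (hK.2 H hH _ (H.erase_subset u))⟩, fun w hw => ?_⟩
    rcases eq_or_ne w u with rfl | hwu
    · exact hxu
    · exact hfix ▸ hxH w fun h => hw (Finset.mem_erase.2 ⟨hwu, h⟩)
  · have hGH : G ⊆ H := fun w hw => by
      by_contra hwH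
      have hpos : 0 < x w + x b * barycenter G w :=
        add_pos_of_nonneg_of_pos (hx w) (mul_pos hxb (barycenter_pos hw))
      rw [← stellarMap_of_ne (ne_of_mem_of_not_mem hw hbG), hxH w hwH] at hpos
      exact hpos.false
    refine ⟨insert b (H.erase u), ⟨fun h => ?_, Or.inr ⟨Finset.mem_insert_self b _,
      hK.2 H hH _ (Finset.union_subset ?_ hGH)⟩⟩, fun w hw => ?_⟩
    · simpa [hub] using h hu
    · exact (Finset.erase_insert_subset b _).trans (H.erase_subset u)
    · obtain ⟨hwb, hwH⟩ : w ≠ b ∧ (w ≠ u → w ∉ H) := by simpa using hw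
      rcases eq_or_ne w u with rfl | hwu
      · exact hxu
      · have hxw := hxH w (hwH hwu)
        rw [stellarMap_of_ne hwb] at hxw
        exact ((add_eq_zero_iff_of_nonneg (hx w)
          (mul_nonneg (hx b) (barycenter_nonneg w))).1 hxw).1

theorem mem_geomReal_stellar_iff (hK : IsComplexOn V s K) (hG : G ∈ K) (hne : G.Nonempty)
    (hb : b ∉ s) {x : V → ℝ} :
    x ∈ geomReal V (stellar K G b) ↔
      (0 ≤ x ∧ ∃ w ∈ G, x w = 0) ∧ stellarMap G b x ∈ geomReal V K := by
  have hbG : b ∉ G := fun h => hb (hK.1 G hG h)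
  have hK' : ∀ F ∈ K, F ⊆ insert b s := fun F hF => (hK.1 F hF).trans (Finset.subset_insert b s)
  rw [mem_geomReal_iff (isComplexOn_stellar hK).1, mem_geomReal_iff hK',
    sum_stellarMap hne (hK' G hG) (Finset.mem_insert_self b s)]
  constructor
  · rintro ⟨hx0, hx1, hF⟩
    refine ⟨⟨hx0, ?_⟩, stellarMap_nonneg hbG hx0, hx1, exists_face_stellarMap hK hbG hb hF⟩
    obtain ⟨F, ⟨hGF, -⟩, hxF⟩ := hF
    obtain ⟨w, hwG, hwF⟩ := Finset.not_subset.1 hGF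
    exact ⟨w, hwG, hxF w hwF⟩
  · rintro ⟨⟨hx0, u, hu, hxu⟩, -, hx1, hH⟩
    exact ⟨hx0, hx1, exists_face_stellar hK hbG hx0 hu hxu hH⟩

theorem bijOn_stellarMap_geomReal (hK : IsComplexOn V s K) (hG : G ∈ K) (hne : G.Nonempty)
    (hb : b ∉ s) : BijOn (stellarMap G b) (geomReal V (stellar K G b)) (geomReal V K) := by
  have hdom : geomReal V (stellar K G b) =
      {x | 0 ≤ x ∧ ∃ w ∈ G, x w = 0} ∩ stellarMap G b ⁻¹' geomReal V K :=
    Set.ext fun x => mem_geomReal_stellar_iff hK hG hne hb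
  rw [hdom]
  refine (bijOn_stellarMap hne fun h => hb (hK.1 G hG h)).subset_right fun y hy => ?_
  exact ⟨((mem_geomReal_iff hK.1).1 hy).1, eq_zero_of_mem_geomReal hK.1 hy b hb⟩

theorem plMap_stellarMap {m : ℕ} (g : V → Fin m → ℝ) {x : V → ℝ} (hx : x.support.Finite) :
    plMap g (stellarMap G b x) =
      plMap (Function.update g b (plMap g (barycenter G))) x := by
  rw [plMap_update g b _ hx]
  lift x to V →₀ ℝ using hx
  simp only [stellarMap, ← Finsupp.single_eq_pi_single, ← Finsupp.coe_sub, ← Finsupp.coe_smul,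
    ← Finsupp.coe_add, plMap_coe, map_add, map_smul, map_sub, Finsupp.linearCombination_single,
    one_smul]

theorem bijOn_plMap_stellar (hK : IsComplexOn V s K) (hG : G ∈ K) (hne : G.Nonempty)
    (hb : b ∉ s) {m : ℕ} {g : V → Fin m → ℝ} {T : Set (Fin m → ℝ)}
    (hg : BijOn (plMap g) (geomReal V K) T) :
    BijOn (plMap (Function.update g b (plMap g (barycenter G))))
      (geomReal V (stellar K G b)) T :=
  (hg.comp (bijOn_stellarMap_geomReal hK hG hne hb)).congr fun _ hx =>
    plMap_stellarMap g (finite_support_of_mem_geomReal hx)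

theorem exists_subdivision_inducing [Infinite V] {Δ : Set (Finset V)} (hΔ : IsComplexOn V s Δ)
    (hne : Δ.Nonempty) {t : Finset V} (hst : s ⊆ t) (hK : IsComplexOn V t K) (hΔK : Δ ⊆ K)
    {m : ℕ} {g : V → Fin m → ℝ} {T : Set (Fin m → ℝ)} (hg : BijOn (plMap g) (geomReal V K) T) :
    ∃ (t' : Finset V) (K' : Set (Finset V)) (g' : V → Fin m → ℝ),
      t ⊆ t' ∧ IsComplexOn V t' K' ∧ {F ∈ K' | F ⊆ s} = Δ ∧ EqOn g' g t ∧
        BijOn (plMap g') (geomReal V K') T := by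
  induction hN : ({F ∈ K | F ⊆ s} \ Δ).ncard using Nat.strong_induction_on
    generalizing t K g with | _ N ih
  subst hN
  by_cases hext : {F ∈ K | F ⊆ s} ⊆ Δ
  · exact ⟨t, K, g, subset_rfl, hK, hext.antisymm fun F hF => ⟨hΔK hF, hΔ.1 F hF⟩,
      eqOn_refl g t, hg⟩
  obtain ⟨G, ⟨hGK, hGs⟩, hGΔ⟩ := not_subset.1 hext
  have hGne : G.Nonempty := by
    rw [Finset.nonempty_iff_ne_empty]
    rintro rfl
    obtain ⟨F, hF⟩ := hne
    exact hGΔ (hΔ.2 F hF ∅ F.empty_subset)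
  have hGΔ' : ∀ F ∈ Δ, ¬ G ⊆ F := fun F hF hGF => hGΔ (hΔ.2 F hF G hGF)
  obtain ⟨b, hb⟩ := Infinite.exists_notMem_finset t
  obtain ⟨t', K', g', htt', hK', hind, hg'g, hg'⟩ := ih _
    (ncard_stellar_diff_lt hGK hGs hGΔ fun h => hb (hst h))
    (hst.trans (Finset.subset_insert b t)) (isComplexOn_stellar hK)
    (fun F hF => ⟨hGΔ' F hF, Or.inl (hΔK hF)⟩)
    (bijOn_plMap_stellar hK hGK hGne hb hg) rfl
  refine ⟨t', K', g', (Finset.subset_insert b t).trans htt', hK', hind, fun w hw => ?_, hg'⟩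
  rw [hg'g (Finset.mem_insert_of_mem hw), Function.update_of_ne (ne_of_mem_of_not_mem hw hb)]

end Stellar

theorem statement_18_general [Infinite V] {s : Finset V} {Δ : Set (Finset V)}
    (hΔ : IsComplexOn V s Δ) (hne : Δ.Nonempty) (v : V) {m : ℕ} (g : V → Fin m → ℝ)
    {B : Set (Fin m → ℝ)} (hgv : g v ∉ affineSpan ℝ B)
    (hg : BijOn (plMap g) (geomReal V {F ∈ Δ | v ∉ F}) B) :
    ∃ (s' : Finset V) (Δ' : Set (Finset V)) (g' : V → Fin m → ℝ),
      s ⊆ s' ∧ IsComplexOn V s' Δ' ∧ {F ∈ Δ' | F ⊆ s} = Δ ∧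
      (∃ e : @Homeomorph (geomReal V Δ') (pyramid (g v) B) (geomTop V Δ') inferInstance,
        ∀ x : geomReal V Δ', (e x : Fin m → ℝ) = plMap g' (x : V → ℝ)) ∧
      ∀ x ∈ geomReal V Δ, plMap g' x = plMap g x := by
  let L : Set (Finset V) := {F ∈ Δ | v ∉ F}
  have erase_mem : ∀ F ∈ Δ, F.erase v ∈ L := fun F hF =>
    ⟨hΔ.2 F hF _ (F.erase_subset v), F.notMem_erase v⟩
  have hL : IsComplexOn V s L :=
    ⟨fun F hF => hΔ.1 F hF.1, fun F hF H hHF => ⟨hΔ.2 F hF.1 H hHF, fun h => hF.2 (hHF h)⟩⟩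
  have hLne : L.Nonempty := let ⟨F, hF⟩ := hne; ⟨F.erase v, erase_mem F hF⟩
  have hcone : BijOn (plMap g) (geomReal V (coneComplex v L)) (pyramid (g v) B) :=
    bijOn_plMap_coneComplex (fun _ hF => hF.2) hLne hgv hg
  obtain ⟨s', Δ', g', hss', hΔ', hind, hg'g, hg'⟩ := exists_subdivision_inducing hΔ hne
    (Finset.subset_insert v s) (isComplexOn_coneComplex hL) erase_mem hcone
  have hsub : s ⊆ insert v s := Finset.subset_insert v s
  refine ⟨s', Δ', g', hsub.trans hss', hΔ', hind,
    (exists_geomTop_homeomorph_iff_bijOn hΔ'.1 g' _).2 hg', fun x hx => ?_⟩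
  exact plMap_congr (hg'g.mono (Finset.coe_subset.2 hsub)) (eq_zero_of_mem_geomReal hΔ.1 hx)

end SimplicialComplex

/-- Extension lemma: a piecewise linear map on a finite simplicial complex `Δ` which sends a
distinguished vertex `v` to `(0, …, 0, 1)` and restricts to a homeomorphism from the
realisation of `Δ` minus `v` onto the standard `(n-1)`-simplex extends, after enlarging `Δ` to
a simplicial complex `Δ'` on a larger finite vertex set inducing `Δ`, to a piecewise linear
homeomorphism onto the standard `n`-simplex in `ℝ^{n+1}`. -/
theorem statement_18 (s : Finset ℕ) (Δ : Set (Finset ℕ)) (hΔ : IsComplexOn ℕ s Δ)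
    (v : ℕ) (hv : {v} ∈ Δ) (n : ℕ) (g : ℕ → Fin (n + 1) → ℝ)
    (hgv : plMap g (Pi.single v 1) = Pi.single (Fin.last n) 1)
    (hhomeo : ∃ e : @Homeomorph (geomReal ℕ { F ∈ Δ | v ∉ F }) (stdSimplexIn (n + 1) n)
        (geomTop ℕ { F ∈ Δ | v ∉ F }) inferInstance,
      ∀ x : geomReal ℕ { F ∈ Δ | v ∉ F }, (e x : Fin (n + 1) → ℝ) = plMap g (x : ℕ → ℝ)) :
    ∃ (s' : Finset ℕ) (Δ' : Set (Finset ℕ)) (g' : ℕ → Fin (n + 1) → ℝ),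
      s ⊆ s' ∧ IsComplexOn ℕ s' Δ' ∧ { F ∈ Δ' | F ⊆ s } = Δ ∧
      (∃ e : @Homeomorph (geomReal ℕ Δ') (stdSimplexIn (n + 1) (n + 1))
          (geomTop ℕ Δ') inferInstance,
        ∀ x : geomReal ℕ Δ', (e x : Fin (n + 1) → ℝ) = plMap g' (x : ℕ → ℝ)) ∧
      ∀ x ∈ geomReal ℕ Δ, plMap g' x = plMap g x := by
  rw [plMap_single] at hgv
  have hapex : g v ∉ affineSpan ℝ (stdSimplexIn (n + 1) n) :=
    hgv ▸ single_last_notMem_affineSpan_stdSimplexIn n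
  rw [stdSimplexIn_succ_eq_pyramid, ← hgv]
  exact statement_18_general hΔ ⟨_, hv⟩ v g hapex
    ((exists_geomTop_homeomorph_iff_bijOn (fun F hF => hΔ.1 F hF.1) g _).1 hhomeo)
end
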